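/- arXiv:2412.01602 — 2 statements merged into one kernel-verified Lean document; each statement's English description precedes it below -/
import Mathlib

section
/- Let C be a simple cycle of length n ≥ 3. Then h*(C_C; z) = (1+3z)^n − (2z)^n, and consequently Vol(C_C) = 4^n − 2^n. -/
open Polynomial Pointwise

/-- The set of vertices (generating points) of the cosmological polytope of the
multigraph with edge-endpoint map `ends : E → Sym2 V`. -/
def cosmoVertices {V E : Type*} [DecidableEq V] [DecidableEq E] (ends : E → Sym2 V) :
    Set ((V ⊕ E) → ℝ) :=
  { x | ∃ (f : E) (i j : V), ends f = s(i, j) ∧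
      (x = Pi.single (Sum.inl i) 1 + Pi.single (Sum.inl j) 1 - Pi.single (Sum.inr f) 1 ∨
       x = Pi.single (Sum.inl i) 1 - Pi.single (Sum.inl j) 1 + Pi.single (Sum.inr f) 1 ∨
       x = -Pi.single (Sum.inl i) 1 + Pi.single (Sum.inl j) 1 + Pi.single (Sum.inr f) 1) }

/-- The cosmological polytope of a multigraph. -/
def cosmoPolytope {V E : Type*} [DecidableEq V] [DecidableEq E] (ends : E → Sym2 V) :
    Set ((V ⊕ E) → ℝ) :=
  convexHull ℝ (cosmoVertices ends)

/-- Number of lattice points of the `t`-th dilate of `P`. -/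
noncomputable def latticePointCount {ι : Type*} (P : Set (ι → ℝ)) (t : ℕ) : ℕ :=
  Set.ncard { x : ι → ℤ | (fun k => (x k : ℝ)) ∈ (t : ℝ) • P }

/-- The Ehrhart series of `P` as a formal power series. -/
noncomputable def ehrhartSeries {ι : Type*} (P : Set (ι → ℝ)) : PowerSeries ℚ :=
  PowerSeries.mk fun t => if t = 0 then 1 else (latticePointCount P t : ℚ)

/-- `h` is the `h^*`-polynomial of the `d`-dimensional lattice polytope `P`:
`Ehr(P; z) = h(z) / (1-z)^(d+1)` as formal power series. -/
def IsHStarPoly {ι : Type*} (P : Set (ι → ℝ)) (d : ℕ) (h : Polynomial ℚ) : Prop :=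
  ehrhartSeries P * (1 - PowerSeries.X) ^ (d + 1) = (h : PowerSeries ℚ)

/-- Adjacency relation of the multigraph given by `ends`. -/
def multigraphAdj {V E : Type*} (ends : E → Sym2 V) (i j : V) : Prop :=
  ∃ f, ends f = s(i, j)

/-- Reachability in the multigraph given by `ends`. -/
def multigraphReach {V E : Type*} (ends : E → Sym2 V) : V → V → Prop :=
  Relation.ReflTransGen (multigraphAdj ends)

/-- The number of connected components of the multigraph given by `ends`. -/
noncomputable def numComponents {V E : Type*} (ends : E → Sym2 V) : ℕ :=
  Nat.card (Quot (multigraphReach ends))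


/-- The endpoint map of the simple cycle of length `n` on vertex set `ZMod n`: one edge
between `i` and `i + 1` for each `i`. -/
def cycleEnds (n : ℕ) : ZMod n → Sym2 (ZMod n) := fun i => s(i, i + 1)

/- A point of the `t`-th dilate of `C_G` is a sum over the edges of points of the cones spanned by
the three vertices attached to one edge. On the cycle such a decomposition of `x` is determined by
the portion `u i` of the coordinate at vertex `i` that goes to the edge from `i` to `i + 1`, and
the cone conditions on `u` are difference constraints with right-hand sides read off from `x`.
When `x` is integral, rounding down preserves them, and the integral solutions are closed under
minima, so each lattice point has a unique least integral solution. A solution is least iff no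
single `u i` can be lowered by `1` and neither can all of them at once, that is, iff at every edge
a lower bound on `u i` is attained and not every edge merely links `u i` to `u (i + 1)`. One edge
contributes `(1 + 3z) / (1 - z)^2` when its weight is tight and `2z / (1 - z)^2` when it is
linked, so the Ehrhart series is `((1 + 3z)^n - (2z)^n) / (1 - z)^(2n)`. -/

section CountingSeries

/-- The generating function of a set `K` graded by `deg`, counting the elements of each degree
`m : ℕ`; pieces that are infinite count as `0`. -/
noncomputable def countingSeries {α : Type*} (K : Set α) (deg : α → ℤ) : PowerSeries ℚ :=
  PowerSeries.mk fun m => ({a ∈ K | deg a = m}.ncard : ℚ)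

/-- The grading of `K` by `deg` is nonnegative and has finite pieces, so that `countingSeries K deg`
counts all elements of `K`. -/
structure IsFinitelyGraded {α : Type*} (K : Set α) (deg : α → ℤ) : Prop where
  nonneg : ∀ a ∈ K, 0 ≤ deg a
  finite : ∀ m : ℕ, {a ∈ K | deg a = m}.Finite

variable {α : Type*} {K L : Set α} {deg : α → ℤ}

lemma IsFinitelyGraded.mono (hL : IsFinitelyGraded L deg) (hKL : K ⊆ L) :
    IsFinitelyGraded K deg where
  nonneg a ha := hL.nonneg a (hKL ha)
  finite m := (hL.finite m).subset fun _ ha => ⟨hKL ha.1, ha.2⟩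

lemma IsFinitelyGraded.union (hK : IsFinitelyGraded K deg) (hL : IsFinitelyGraded L deg) :
    IsFinitelyGraded (K ∪ L) deg where
  nonneg a ha := ha.elim (hK.nonneg a) (hL.nonneg a)
  finite m := by
    simp only [Set.mem_union, Set.sep_union]
    exact (hK.finite m).union (hL.finite m)

lemma countingSeries_union (hK : IsFinitelyGraded K deg) (hL : IsFinitelyGraded L deg)
    (hKL : Disjoint K L) :
    countingSeries (K ∪ L) deg = countingSeries K deg + countingSeries L deg := by
  ext m
  have hdisj : Disjoint {a ∈ K | deg a = m} {a ∈ L | deg a = m} :=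
    hKL.mono (Set.sep_subset _ _) (Set.sep_subset _ _)
  simp only [countingSeries, PowerSeries.coeff_mk, map_add, Set.mem_union,
    Set.sep_union, Set.ncard_union_eq hdisj (hK.finite m) (hL.finite m), Nat.cast_add]

lemma countingSeries_diff (hL : IsFinitelyGraded L deg) (hKL : K ⊆ L) :
    countingSeries (L \ K) deg = countingSeries L deg - countingSeries K deg := by
  rw [eq_sub_iff_add_eq, ← countingSeries_union (hL.mono Set.sdiff_subset) (hL.mono hKL)
    Set.disjoint_sdiff_left, Set.sdiff_union_of_subset hKL]

lemma ncard_univ_pi {ι : Type*} [Fintype ι] (s : ι → Set α) :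
    (Set.univ.pi s).ncard = ∏ i, (s i).ncard := by
  simp only [← Nat.card_coe_set_eq]
  rw [← Nat.card_pi, Nat.card_congr (Equiv.Set.univPi s)]

variable {ι : Type*} [Fintype ι]

lemma pi_degree_eq_biUnion [DecidableEq ι] (hK : ∀ a ∈ K, 0 ≤ deg a) (t : ℕ) :
    {g ∈ Set.univ.pi fun _ : ι => K | ∑ i, deg (g i) = t} =
      ⋃ l ∈ Finset.univ.finsuppAntidiag t, Set.univ.pi fun i => {a ∈ K | deg a = (l i : ℕ)} := by
  ext g
  simp only [Set.mem_ofPred_eq, Set.mem_iUnion, Set.mem_univ_pi, Finset.mem_finsuppAntidiag,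
    exists_prop]
  constructor
  · rintro ⟨hg, hsum⟩
    have hdeg (i) : ((deg (g i)).toNat : ℤ) = deg (g i) := Int.toNat_of_nonneg (hK _ (hg i))
    refine ⟨Finsupp.equivFunOnFinite.symm fun i => (deg (g i)).toNat, ⟨?_, by simp⟩,
      fun i => ⟨hg i, (hdeg i).symm⟩⟩
    zify
    simpa [hdeg] using hsum
  · rintro ⟨l, ⟨hl, -⟩, hg⟩
    refine ⟨fun i => (hg i).1, ?_⟩
    simp only [fun i => (hg i).2, ← hl, Nat.cast_sum]

lemma IsFinitelyGraded.pi (hK : IsFinitelyGraded K deg) :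
    IsFinitelyGraded (Set.univ.pi fun _ : ι => K) fun g => ∑ i, deg (g i) where
  nonneg g hg := Finset.sum_nonneg fun i _ => hK.nonneg _ (hg i trivial)
  finite t := by
    classical
    rw [pi_degree_eq_biUnion hK.nonneg]
    exact (Finset.finite_toSet _).biUnion fun l _ => Set.Finite.pi fun i => hK.finite (l i)

lemma countingSeries_pi (hK : IsFinitelyGraded K deg) :
    countingSeries (Set.univ.pi fun _ : ι => K) (fun g => ∑ i, deg (g i)) =
      countingSeries K deg ^ Fintype.card ι := by
  classical
  ext t
  have hdisj : (SetLike.coe (Finset.univ.finsuppAntidiag t)).PairwiseDisjoint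
      fun l : ι →₀ ℕ => Set.univ.pi fun i => {a ∈ K | deg a = (l i : ℕ)} := by
    refine fun l _ l' _ hne => Set.disjoint_left.mpr fun g hg hg' => hne (Finsupp.ext fun i => ?_)
    exact_mod_cast (hg i trivial).2.symm.trans (hg' i trivial).2
  have hcount : {g ∈ Set.univ.pi fun _ : ι => K | ∑ i, deg (g i) = t}.ncard =
      ∑ l ∈ Finset.univ.finsuppAntidiag t, ∏ i : ι, {a ∈ K | deg a = (l i : ℕ)}.ncard := by
    rw [pi_degree_eq_biUnion hK.nonneg]
    refine ((Finset.finite_toSet _).ncard_biUnion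
      (fun l _ => Set.Finite.pi fun i => hK.finite (l i)) hdisj).trans ?_
    simp only [SetLike.mem_coe, finsum_mem_finset_eq_sum, ncard_univ_pi]
  rw [← Finset.card_univ, ← Finset.prod_const, PowerSeries.coeff_prod]
  simp only [countingSeries, PowerSeries.coeff_mk, hcount, Nat.cast_sum, Nat.cast_prod]

end CountingSeries

lemma mk_affine_mul_one_sub_X_sq {R : Type*} [CommRing R] (a b : R) :
    (PowerSeries.mk fun m => a * m + b) * (1 - PowerSeries.X) ^ 2 =
      PowerSeries.C b + PowerSeries.C (a - b) * PowerSeries.X := by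
  have hsplit : (PowerSeries.mk fun m => a * m + b) =
      PowerSeries.C a * PowerSeries.mk (fun m => ((1 + m).choose 1 : R)) +
        PowerSeries.C (b - a) * PowerSeries.mk 1 := by
    ext m
    simp only [PowerSeries.coeff_mk, map_add, PowerSeries.coeff_C_mul, Nat.choose_one_right,
      Nat.cast_add, Nat.cast_one, Pi.one_apply]
    ring
  have hsq := PowerSeries.mk_add_choose_mul_one_sub_pow_eq_one R 1
  have hone := PowerSeries.mk_one_mul_one_sub_eq_one R
  simp only [map_sub] at hsplit ⊢
  linear_combination (1 - PowerSeries.X) ^ 2 * hsplit + PowerSeries.C a * hsq +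
    (PowerSeries.C b - PowerSeries.C a) * (1 - PowerSeries.X) * hone

/-- The coordinates of a combination of the three vertices attached to one edge: `src` and `tgt` at
the ends of the edge (which add up if the edge is a loop), and `edge` at the edge itself. -/
@[ext] structure EdgeWeight (R : Type*) where
  src : R
  tgt : R
  edge : R

namespace EdgeWeight

variable {R : Type*}

/-- The sum of the coordinates, which is `t` on the `t`-th dilate of the polytope. -/
def degree [Add R] (p : EdgeWeight R) : R := p.src + p.tgt + p.edge

/-- The cone spanned by the three vertices attached to one edge, described by its facets. -/
def cone (R : Type*) [Zero R] [Add R] [LE R] : Set (EdgeWeight R) :=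
  {p | 0 ≤ p.src + p.tgt ∧ 0 ≤ p.src + p.edge ∧ 0 ≤ p.tgt + p.edge}

/-- The edge weight with coefficient `c k` at the `k`-th vertex attached to the edge. -/
def ofBarycentric [AddGroup R] (c : Fin 3 → R) : EdgeWeight R :=
  ⟨c 0 + c 1 - c 2, c 0 - c 1 + c 2, -c 0 + c 1 + c 2⟩

lemma degree_ofBarycentric [AddCommGroup R] (c : Fin 3 → R) :
    (ofBarycentric c).degree = ∑ k, c k := by
  simp only [degree, ofBarycentric, Fin.sum_univ_three]
  abel

lemma ofBarycentric_mem_cone [CommRing R] [LinearOrder R] [IsStrictOrderedRing R] {c : Fin 3 → R}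
    (hc : ∀ k, 0 ≤ c k) : ofBarycentric c ∈ cone R := by
  refine ⟨?_, ?_, ?_⟩ <;> simp only [ofBarycentric] <;> linarith [hc 0, hc 1, hc 2]

lemma exists_ofBarycentric_eq [Field R] [LinearOrder R] [IsStrictOrderedRing R] {p : EdgeWeight R}
    (hp : p ∈ cone R) :
    ∃ c : Fin 3 → R, (∀ k, 0 ≤ c k) ∧ ofBarycentric c = p := by
  obtain ⟨hst, hse, hte⟩ := hp
  refine ⟨![(p.src + p.tgt) / 2, (p.src + p.edge) / 2, (p.tgt + p.edge) / 2],
    Fin.forall_fin_succ.mpr ⟨div_nonneg hst zero_le_two, Fin.forall_fin_two.mpr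
      ⟨div_nonneg hse zero_le_two, div_nonneg hte zero_le_two⟩⟩, ?_⟩
  ext <;> simp only [ofBarycentric, Matrix.cons_val] <;> ring

end EdgeWeight

section Polytope

lemma mem_smul_convexHull_range_iff {ι M : Type*} [Fintype ι] [AddCommGroup M] [Module ℝ M]
    (v : ι → M) {t : ℝ} (ht : 0 < t) {x : M} :
    x ∈ t • convexHull ℝ (Set.range v) ↔
      ∃ c : ι → ℝ, (∀ i, 0 ≤ c i) ∧ ∑ i, c i = t ∧ ∑ i, c i • v i = x := by
  classical
  have hrange : Set.range v =
      Fintype.linearCombination ℝ v '' Set.range fun i => Pi.single i (1 : ℝ) := by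
    rw [← Set.range_comp]
    congr 1
    ext i
    simp
  rw [hrange, ← LinearMap.image_convexHull, convexHull_rangle_single_eq_stdSimplex]
  constructor
  · rintro ⟨_, ⟨c, ⟨hc, hsum⟩, rfl⟩, rfl⟩
    refine ⟨t • c, fun i => mul_nonneg ht.le (hc i), ?_, ?_⟩
    · simp [← Finset.mul_sum, hsum]
    · simp [Fintype.linearCombination_apply, Finset.smul_sum, mul_smul]
  · rintro ⟨c, hc, hsum, rfl⟩
    refine ⟨_, ⟨t⁻¹ • c, ⟨fun i => mul_nonneg (inv_nonneg.mpr ht.le) (hc i), ?_⟩, rfl⟩, ?_⟩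
    · simp [← Finset.mul_sum, hsum, ht.ne']
    · simp [Fintype.linearCombination_apply, Finset.smul_sum, smul_smul, ht.ne']

variable {V E : Type*} [DecidableEq V] [DecidableEq E]

/-- The three vertices of the cosmological polytope attached to each edge, when the edge `f` is
given the orientation from `src f` to `tgt f`. -/
def edgeVertex (src tgt : E → V) : E × Fin 3 → (V ⊕ E → ℝ) := fun p =>
  let i : V ⊕ E → ℝ := Pi.single (Sum.inl (src p.1)) 1
  let j : V ⊕ E → ℝ := Pi.single (Sum.inl (tgt p.1)) 1
  let f : V ⊕ E → ℝ := Pi.single (Sum.inr p.1) 1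
  ![i + j - f, i - j + f, -i + j + f] p.2

lemma cosmoVertices_eq_range (src tgt : E → V) :
    cosmoVertices (fun f => s(src f, tgt f)) = Set.range (edgeVertex src tgt) := by
  ext x
  constructor
  · rintro ⟨f, i, j, hf, hx⟩
    rcases Sym2.eq_iff.mp hf with ⟨rfl, rfl⟩ | ⟨rfl, rfl⟩ <;> rcases hx with rfl | rfl | rfl
    · exact ⟨(f, 0), rfl⟩
    · exact ⟨(f, 1), rfl⟩
    · exact ⟨(f, 2), rfl⟩
    · exact ⟨(f, 0), by simp only [edgeVertex, Matrix.cons_val]; abel⟩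
    · exact ⟨(f, 2), by simp only [edgeVertex, Matrix.cons_val]; abel⟩
    · exact ⟨(f, 1), by simp only [edgeVertex, Matrix.cons_val]; abel⟩
  · rintro ⟨⟨f, k⟩, rfl⟩
    refine ⟨f, src f, tgt f, rfl, ?_⟩
    fin_cases k
    · exact .inl rfl
    · exact .inr (.inl rfl)
    · exact .inr (.inr rfl)

variable [Fintype E] {R : Type*}

/-- The point of `R^(V ∪ E)` with contribution `g f` from each edge `f`. -/
def edgeCombination [CommRing R] (src tgt : E → V) (g : E → EdgeWeight R) : V ⊕ E → R :=
  ∑ f, ((g f).src • Pi.single (Sum.inl (src f)) 1 + (g f).tgt • Pi.single (Sum.inl (tgt f)) 1 +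
    (g f).edge • Pi.single (Sum.inr f) 1)

lemma sum_edgeCombination [Fintype V] [CommRing R] (src tgt : E → V) (g : E → EdgeWeight R) :
    ∑ k, edgeCombination src tgt g k = ∑ f, (g f).degree := by
  simp only [edgeCombination, Finset.sum_apply]
  rw [Finset.sum_comm]
  refine Finset.sum_congr rfl fun f _ => ?_
  simp only [Pi.add_apply, Pi.smul_apply, smul_eq_mul, Finset.sum_add_distrib, ← Finset.mul_sum,
    Finset.sum_pi_single', Finset.mem_univ, if_true, mul_one, EdgeWeight.degree]

lemma sum_smul_edgeVertex (src tgt : E → V) (c : E × Fin 3 → ℝ) :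
    ∑ p, c p • edgeVertex src tgt p =
      edgeCombination src tgt fun f => EdgeWeight.ofBarycentric fun k => c (f, k) := by
  rw [Fintype.sum_prod_type, edgeCombination]
  refine Finset.sum_congr rfl fun f _ => ?_
  simp only [Fin.sum_univ_three, edgeVertex, Matrix.cons_val, EdgeWeight.ofBarycentric]
  module

theorem mem_smul_cosmoPolytope_iff (src tgt : E → V) {t : ℝ} (ht : 0 < t) {x : V ⊕ E → ℝ} :
    x ∈ t • cosmoPolytope (fun f => s(src f, tgt f)) ↔
      ∃ g : E → EdgeWeight ℝ, (∀ f, g f ∈ EdgeWeight.cone ℝ) ∧ ∑ f, (g f).degree = t ∧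
        edgeCombination src tgt g = x := by
  rw [cosmoPolytope, cosmoVertices_eq_range, mem_smul_convexHull_range_iff _ ht]
  constructor
  · rintro ⟨c, hc, hsum, rfl⟩
    refine ⟨fun f => .ofBarycentric fun k => c (f, k),
      fun f => EdgeWeight.ofBarycentric_mem_cone fun k => hc (f, k), ?_,
      (sum_smul_edgeVertex src tgt c).symm⟩
    simp only [EdgeWeight.degree_ofBarycentric, ← hsum, Fintype.sum_prod_type]
  · rintro ⟨g, hg, hsum, rfl⟩
    choose c hc hcg using fun f => EdgeWeight.exists_ofBarycentric_eq (hg f)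
    refine ⟨fun p => c p.1 p.2, fun p => hc p.1 p.2, ?_, ?_⟩
    · simp only [Fintype.sum_prod_type, ← hsum, ← hcg, EdgeWeight.degree_ofBarycentric]
    · simp only [sum_smul_edgeVertex, hcg]

end Polytope

section Potentials

variable {n : ℕ} {R : Type*}

/-- The edge weights on the cycle that have source coordinates `u` and combine to `x`. -/
def potentialWeight [Sub R] (x : ZMod n ⊕ ZMod n → R) (u : ZMod n → R) (i : ZMod n) :
    EdgeWeight R :=
  ⟨u i, x (.inl (i + 1)) - u (i + 1), x (.inr i)⟩

/-- The potentials of `x`: the solutions `u` of the system of difference constraints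
`-y i ≤ u i`, `u (i + 1) - x (i + 1) ≤ u i`, `u (i + 1) ≤ x (i + 1) + y i`, where `x` and `y` are
the vertex and edge coordinates. They parametrize the decompositions of `x` along the edges. -/
def potentials [Ring R] [LE R] (x : ZMod n ⊕ ZMod n → R) : Set (ZMod n → R) :=
  {u | ∀ i, potentialWeight x u i ∈ EdgeWeight.cone R}

lemma nonempty_potentials_intCast_iff [CommRing R] [LinearOrder R] [IsStrictOrderedRing R]
    [FloorRing R] (x : ZMod n ⊕ ZMod n → ℤ) :
    (potentials fun k => (x k : R)).Nonempty ↔ (potentials x).Nonempty := by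
  constructor
  · rintro ⟨u, hu⟩
    refine ⟨fun i => ⌊u i⌋, fun i => ?_⟩
    obtain ⟨hst, hse, hte⟩ := hu i
    simp only [potentialWeight] at hst hse hte
    have hst' : ⌊u (i + 1)⌋ ≤ ⌊u i⌋ + x (.inl (i + 1)) := by
      rw [← Int.floor_add_intCast]
      exact Int.floor_mono (by linarith)
    have hse' : -x (.inr i) ≤ ⌊u i⌋ := Int.le_floor.mpr (by push_cast; linarith)
    have hte' : ⌊u (i + 1)⌋ ≤ x (.inl (i + 1)) + x (.inr i) :=
      Int.floor_le_iff.mpr (by push_cast; linarith)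
    refine ⟨?_, ?_, ?_⟩ <;> simp only [potentialWeight] <;> linarith
  · rintro ⟨u, hu⟩
    refine ⟨fun i => (u i : R), fun i => ?_⟩
    obtain ⟨hst, hse, hte⟩ := hu i
    refine ⟨?_, ?_, ?_⟩ <;> simp only [potentialWeight] <;> exact_mod_cast ‹_›

section Cycle

variable [NeZero n]

lemma edgeCombination_cycle_inl [CommRing R] (g : ZMod n → EdgeWeight R) (i : ZMod n) :
    edgeCombination id (· + 1) g (.inl (i + 1)) = (g (i + 1)).src + (g i).tgt := by
  simp [edgeCombination, Finset.sum_add_distrib, Pi.single_apply]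

lemma edgeCombination_cycle_inr [CommRing R] (g : ZMod n → EdgeWeight R) (i : ZMod n) :
    edgeCombination id (· + 1) g (.inr i) = (g i).edge := by
  simp [edgeCombination, Pi.single_apply]

lemma edgeCombination_cycle_eq_iff [CommRing R] {g : ZMod n → EdgeWeight R}
    {x : ZMod n ⊕ ZMod n → R} :
    edgeCombination id (· + 1) g = x ↔ potentialWeight x (fun i => (g i).src) = g := by
  constructor
  · rintro rfl
    ext i
    · rfl
    · simp only [potentialWeight, edgeCombination_cycle_inl, add_sub_cancel_left]
    · simp only [potentialWeight, edgeCombination_cycle_inr]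
  · intro hg
    ext (i | i)
    · obtain ⟨i, rfl⟩ := (Equiv.addRight (1 : ZMod n)).surjective i
      have htgt := congrArg EdgeWeight.tgt (congrFun hg i)
      exact (edgeCombination_cycle_inl g i).trans (sub_eq_iff_eq_add'.mp htgt).symm
    · exact (edgeCombination_cycle_inr g i).trans (congrArg EdgeWeight.edge (congrFun hg i)).symm

lemma edgeCombination_potentialWeight [CommRing R] (x : ZMod n ⊕ ZMod n → R) (u : ZMod n → R) :
    edgeCombination id (· + 1) (potentialWeight x u) = x :=
  edgeCombination_cycle_eq_iff.mpr rfl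

lemma sum_degree_potentialWeight [CommRing R] (x : ZMod n ⊕ ZMod n → R) (u : ZMod n → R) :
    ∑ i, (potentialWeight x u i).degree = ∑ k, x k := by
  rw [← sum_edgeCombination id (· + 1), edgeCombination_potentialWeight]

lemma mem_smul_cosmoPolytope_cycleEnds_iff {t : ℝ} (ht : 0 < t) {x : ZMod n ⊕ ZMod n → ℝ} :
    x ∈ t • cosmoPolytope (cycleEnds n) ↔ (potentials x).Nonempty ∧ ∑ k, x k = t := by
  refine (mem_smul_cosmoPolytope_iff id (· + 1) ht).trans ?_
  constructor
  · rintro ⟨g, hg, hsum, hx⟩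
    have hgx := edgeCombination_cycle_eq_iff.mp hx
    refine ⟨⟨fun i => (g i).src, fun i => hgx ▸ hg i⟩, ?_⟩
    rw [← hx, sum_edgeCombination, hsum]
  · rintro ⟨⟨u, hu⟩, hsum⟩
    exact ⟨potentialWeight x u, hu, (sum_degree_potentialWeight x u).trans hsum,
      edgeCombination_potentialWeight x u⟩

lemma intCast_mem_smul_cosmoPolytope_cycleEnds_iff {t : ℕ} (ht : t ≠ 0)
    {x : ZMod n ⊕ ZMod n → ℤ} :
    (fun k => (x k : ℝ)) ∈ (t : ℝ) • cosmoPolytope (cycleEnds n) ↔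
      (potentials x).Nonempty ∧ ∑ k, x k = t := by
  rw [mem_smul_cosmoPolytope_cycleEnds_iff (by positivity), nonempty_potentials_intCast_iff]
  norm_cast

end Cycle

lemma exists_isLeast_potentials {x : ZMod n ⊕ ZMod n → ℤ} (hx : (potentials x).Nonempty) :
    ∃ u, IsLeast (potentials x) u := by
  let values (i : ZMod n) : Set ℤ := (fun u => u i) '' potentials x
  have hbdd (i) : BddBelow (values i) := by
    refine ⟨-x (.inr i), ?_⟩
    rintro _ ⟨u, hu, rfl⟩
    exact neg_le_iff_add_nonneg.mpr (hu i).2.1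
  have hle {u} (hu : u ∈ potentials x) (i) : sInf (values i) ≤ u i :=
    csInf_le (hbdd i) (Set.mem_image_of_mem _ hu)
  refine ⟨fun i => sInf (values i), fun i => ?_, fun u hu i => hle hu i⟩
  obtain ⟨u, hu, hui⟩ := Int.csInf_mem (hx.image _) (hbdd i)
  obtain ⟨hst, hse, hte⟩ := hu i
  have hsucc := hle hu (i + 1)
  refine ⟨?_, ?_, ?_⟩ <;> simp only [potentialWeight, values, ← hui] at * <;> linarith

end Potentials

namespace EdgeWeight

/-- The integral edge weights of a potential at an edge where its lower bound `-y i ≤ u i`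
is attained. -/
def grounded : Set (EdgeWeight ℤ) := {p ∈ cone ℤ | p.src + p.edge = 0}

/-- The integral edge weights of a potential at an edge where its lower bound
`u (i + 1) - x (i + 1) ≤ u i` is attained, but `-y i ≤ u i` is not. -/
def linked : Set (EdgeWeight ℤ) := {p ∈ cone ℤ | p.src + p.tgt = 0 ∧ 0 < p.src + p.edge}

lemma sep_grounded_degree_eq_image (m : ℕ) :
    {p ∈ grounded | p.degree = m} =
      (fun k : ℤ => (⟨k, m, -k⟩ : EdgeWeight ℤ)) '' Finset.Icc (-m : ℤ) m := by
  ext ⟨s, t, e⟩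
  simp only [grounded, cone, degree, Set.mem_ofPred_eq, Set.mem_image, Finset.coe_Icc, Set.mem_Icc,
    EdgeWeight.mk.injEq]
  constructor
  · intro h
    exact ⟨s, by omega, rfl, by omega, by omega⟩
  · rintro ⟨k, hk, rfl, rfl, rfl⟩
    omega

lemma sep_linked_degree_eq_image (m : ℕ) :
    {p ∈ linked | p.degree = m} =
      (fun k : ℤ => (⟨k, -k, m⟩ : EdgeWeight ℤ)) '' Finset.Ioc (-m : ℤ) m := by
  ext ⟨s, t, e⟩
  simp only [linked, cone, degree, Set.mem_ofPred_eq, Set.mem_image, Finset.coe_Ioc, Set.mem_Ioc,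
    EdgeWeight.mk.injEq]
  constructor
  · intro h
    exact ⟨s, by omega, rfl, by omega, by omega⟩
  · rintro ⟨k, hk, rfl, rfl, rfl⟩
    omega

lemma degree_nonneg {p : EdgeWeight ℤ} (hp : p ∈ cone ℤ) : 0 ≤ p.degree := by
  obtain ⟨hst, hse, hte⟩ := hp
  simp only [degree]
  omega

lemma isFinitelyGraded_grounded : IsFinitelyGraded grounded degree where
  nonneg _ hp := degree_nonneg hp.1
  finite m := sep_grounded_degree_eq_image m ▸ (Finset.finite_toSet _).image _

lemma isFinitelyGraded_linked : IsFinitelyGraded linked degree where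
  nonneg _ hp := degree_nonneg hp.1
  finite m := sep_linked_degree_eq_image m ▸ (Finset.finite_toSet _).image _

lemma countingSeries_grounded_mul :
    countingSeries grounded degree * (1 - PowerSeries.X) ^ 2 = 1 + PowerSeries.X := by
  have hcard (m : ℕ) : ({p ∈ grounded | p.degree = m}.ncard : ℚ) = 2 * m + 1 := by
    rw [sep_grounded_degree_eq_image,
      Set.ncard_image_of_injective _ fun k l h => congrArg EdgeWeight.src h,
      Set.ncard_coe_finset, Int.card_Icc]
    norm_cast
    omega
  simp only [countingSeries, hcard, mk_affine_mul_one_sub_X_sq]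
  norm_num

lemma countingSeries_linked_mul :
    countingSeries linked degree * (1 - PowerSeries.X) ^ 2 = 2 * PowerSeries.X := by
  have hcard (m : ℕ) : ({p ∈ linked | p.degree = m}.ncard : ℚ) = 2 * m + 0 := by
    rw [sep_linked_degree_eq_image,
      Set.ncard_image_of_injective _ fun k l h => congrArg EdgeWeight.src h,
      Set.ncard_coe_finset, Int.card_Ioc]
    norm_cast
    omega
  simp only [countingSeries, hcard, mk_affine_mul_one_sub_X_sq]
  rw [map_zero, zero_add, sub_zero, map_ofNat]

/-- The integral edge weights of a potential at an edge where one of its lower bounds is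
attained. -/
def tight : Set (EdgeWeight ℤ) := grounded ∪ linked

lemma isFinitelyGraded_tight : IsFinitelyGraded tight degree :=
  isFinitelyGraded_grounded.union isFinitelyGraded_linked

lemma countingSeries_tight_mul :
    countingSeries tight degree * (1 - PowerSeries.X) ^ 2 = 1 + 3 * PowerSeries.X := by
  have hdisj : Disjoint grounded linked :=
    Set.disjoint_left.mpr fun _ hg hl => hl.2.2.ne' hg.2
  rw [tight, countingSeries_union isFinitelyGraded_grounded isFinitelyGraded_linked hdisj, add_mul,
    countingSeries_grounded_mul, countingSeries_linked_mul]
  ring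

end EdgeWeight

section LeastPotential

variable {n : ℕ} {x : ZMod n ⊕ ZMod n → ℤ} {u : ZMod n → ℤ}

lemma tight_of_isLeast_potentials (hu : IsLeast (potentials x) u) (i : ZMod n) :
    potentialWeight x u i ∈ EdgeWeight.tight := by
  by_contra hi
  have hcone := hu.1 i
  simp only [EdgeWeight.tight, EdgeWeight.grounded, EdgeWeight.linked, Set.mem_union,
    Set.mem_ofPred_eq, EdgeWeight.cone, potentialWeight] at hi hcone
  have hlower : u - Pi.single i 1 ∈ potentials x := by
    intro j
    have hj := hu.1 j
    simp only [EdgeWeight.cone, potentialWeight, Set.mem_ofPred_eq, Pi.sub_apply,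
      Pi.single_apply] at hj ⊢
    split_ifs with hji hji' hji' <;> subst_vars <;> grind
  have := hu.2 hlower i
  simp at this

lemma exists_notMem_linked_of_isLeast_potentials (hu : IsLeast (potentials x) u) :
    ∃ i, potentialWeight x u i ∉ EdgeWeight.linked := by
  by_contra! hlinked
  have hlower : u - 1 ∈ potentials x := by
    intro i
    obtain ⟨⟨-, -, hte⟩, hst, hse⟩ := hlinked i
    refine ⟨?_, ?_, ?_⟩ <;>
      simp only [potentialWeight, Pi.sub_apply, Pi.one_apply] at * <;> linarith
  have := hu.2 hlower 0
  simp at this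

variable [NeZero n]

lemma forall_zmod_of_add_one {P : ZMod n → Prop} (hP : ∀ i, P (i + 1) → P i) {j : ZMod n}
    (hj : P j) (i : ZMod n) : P i := by
  have hsub (k : ℕ) : P (j - k) := by
    induction k with
    | zero => simpa using hj
    | succ k ih => exact hP _ (by simpa [sub_add_eq_sub_sub] using ih)
  simpa using hsub (j - i).val

lemma isLeast_potentials_of_tight (htight : ∀ i, potentialWeight x u i ∈ EdgeWeight.tight)
    {j : ZMod n} (hj : potentialWeight x u j ∉ EdgeWeight.linked) : IsLeast (potentials x) u := by
  refine ⟨fun i => (htight i).elim And.left And.left, fun v hv => ?_⟩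
  have hgrounded {i} (hi : potentialWeight x u i ∈ EdgeWeight.grounded) : u i ≤ v i := by
    have hui : u i + x (.inr i) = 0 := hi.2
    have hvi : 0 ≤ v i + x (.inr i) := (hv i).2.1
    linarith
  have hlinked (i) (hsucc : u (i + 1) ≤ v (i + 1)) : u i ≤ v i := by
    refine (htight i).elim hgrounded fun hi => ?_
    have hui : u i + (x (.inl (i + 1)) - u (i + 1)) = 0 := hi.2.1
    have hvi : 0 ≤ v i + (x (.inl (i + 1)) - v (i + 1)) := (hv i).1
    linarith
  exact fun i => forall_zmod_of_add_one (P := fun i => u i ≤ v i) hlinked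
    (hgrounded ((htight j).resolve_right hj)) i

/-- The edge weights on the cycle that come from least potentials: they are tight at every edge, but
not linked at every edge. -/
def leastWeights (n : ℕ) : Set (ZMod n → EdgeWeight ℤ) :=
  (Set.univ.pi fun _ => EdgeWeight.tight) \ Set.univ.pi fun _ => EdgeWeight.linked

lemma isLeast_potentials_iff :
    IsLeast (potentials x) u ↔ potentialWeight x u ∈ leastWeights n := by
  simp only [leastWeights, Set.mem_sdiff, Set.mem_univ_pi, not_forall]
  exact ⟨fun hu => ⟨tight_of_isLeast_potentials hu, exists_notMem_linked_of_isLeast_potentials hu⟩,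
    fun ⟨htight, _, hj⟩ => isLeast_potentials_of_tight htight hj⟩

lemma edgeCombination_injOn_leastWeights :
    Set.InjOn (edgeCombination (id : ZMod n → ZMod n) (· + 1)) (leastWeights n) := by
  intro g hg h hh hgh
  have hpot (g : ZMod n → EdgeWeight ℤ) :
      potentialWeight (edgeCombination id (· + 1) g) (fun i => (g i).src) = g :=
    edgeCombination_cycle_eq_iff.mp rfl
  have hleast {g} (hg : g ∈ leastWeights n) :
      IsLeast (potentials (edgeCombination id (· + 1) g)) fun i => (g i).src :=
    isLeast_potentials_iff.mpr ((hpot g).symm ▸ hg)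
  have hsrc := (hleast hg).unique (hgh ▸ hleast hh)
  rw [← hpot g, ← hpot h, hgh, hsrc]

lemma latticePoints_smul_cosmoPolytope_cycleEnds {t : ℕ} (ht : t ≠ 0) :
    {x : ZMod n ⊕ ZMod n → ℤ | (fun k => (x k : ℝ)) ∈ (t : ℝ) • cosmoPolytope (cycleEnds n)} =
      edgeCombination id (· + 1) '' {g ∈ leastWeights n | ∑ i, (g i).degree = t} := by
  ext x
  rw [Set.mem_ofPred_eq, intCast_mem_smul_cosmoPolytope_cycleEnds_iff ht]
  constructor
  · rintro ⟨hx, hsum⟩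
    obtain ⟨u, hu⟩ := exists_isLeast_potentials hx
    exact ⟨potentialWeight x u,
      ⟨isLeast_potentials_iff.mp hu, (sum_degree_potentialWeight x u).trans hsum⟩,
      edgeCombination_potentialWeight x u⟩
  · rintro ⟨g, ⟨hg, hsum⟩, hx⟩
    have hgx := edgeCombination_cycle_eq_iff.mp hx
    refine ⟨⟨_, (isLeast_potentials_iff.mpr (hgx ▸ hg)).1⟩, ?_⟩
    rw [← hx, sum_edgeCombination, hsum]

end LeastPotential

section EhrhartSeries

variable (n : ℕ) [NeZero n]

lemma countingSeries_leastWeights :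
    countingSeries (leastWeights n) (fun g => ∑ i, (g i).degree) =
      countingSeries EdgeWeight.tight EdgeWeight.degree ^ n -
        countingSeries EdgeWeight.linked EdgeWeight.degree ^ n := by
  rw [leastWeights, countingSeries_diff EdgeWeight.isFinitelyGraded_tight.pi
    (Set.pi_mono fun _ _ => Set.subset_union_right),
    countingSeries_pi EdgeWeight.isFinitelyGraded_tight,
    countingSeries_pi EdgeWeight.isFinitelyGraded_linked, ZMod.card]

lemma coeff_zero_countingSeries_leastWeights :
    PowerSeries.coeff 0 (countingSeries (leastWeights n) fun g => ∑ i, (g i).degree) = 1 := by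
  have htight := congrArg PowerSeries.constantCoeff EdgeWeight.countingSeries_tight_mul
  have hlinked := congrArg PowerSeries.constantCoeff EdgeWeight.countingSeries_linked_mul
  simp only [map_mul, map_pow, map_sub, map_add, map_one, PowerSeries.constantCoeff_X, sub_zero,
    one_pow, mul_one, mul_zero, add_zero] at htight hlinked
  rw [countingSeries_leastWeights, PowerSeries.coeff_zero_eq_constantCoeff_apply, map_sub, map_pow,
    map_pow, htight, hlinked, one_pow, zero_pow (NeZero.ne n), sub_zero]

lemma ehrhartSeries_cosmoPolytope_cycleEnds :
    ehrhartSeries (cosmoPolytope (cycleEnds n)) =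
      countingSeries (leastWeights n) fun g => ∑ i, (g i).degree := by
  ext t
  rw [ehrhartSeries, PowerSeries.coeff_mk]
  split_ifs with ht
  · rw [ht, coeff_zero_countingSeries_leastWeights]
  · rw [latticePointCount, latticePoints_smul_cosmoPolytope_cycleEnds ht,
      (edgeCombination_injOn_leastWeights.mono (Set.sep_subset _ _)).ncard_image, countingSeries,
      PowerSeries.coeff_mk]

end EhrhartSeries

theorem hstar_simple_cycle_general (n : ℕ) [NeZero n] :
    IsHStarPoly (cosmoPolytope (cycleEnds n))
      (Fintype.card (ZMod n) + Fintype.card (ZMod n) - 1)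
      ((1 + 3 * Polynomial.X) ^ n - (2 * Polynomial.X) ^ n) ∧
    (((1 + 3 * Polynomial.X) ^ n - (2 * Polynomial.X) ^ n : Polynomial ℚ)).eval 1 =
      4 ^ n - 2 ^ n := by
  refine ⟨?_, by norm_num⟩
  have hdim : Fintype.card (ZMod n) + Fintype.card (ZMod n) - 1 + 1 = 2 * n := by
    have := NeZero.pos n
    rw [ZMod.card]
    omega
  have hcast (k : ℕ) [k.AtLeastTwo] : ((OfNat.ofNat k : ℚ[X]) : PowerSeries ℚ) = OfNat.ofNat k :=
    map_ofNat (Polynomial.coeToPowerSeries.ringHom (R := ℚ)) k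
  rw [IsHStarPoly, ehrhartSeries_cosmoPolytope_cycleEnds, countingSeries_leastWeights, hdim,
    pow_mul, sub_mul, ← mul_pow, ← mul_pow, EdgeWeight.countingSeries_tight_mul,
    EdgeWeight.countingSeries_linked_mul]
  simp [hcast]

/-- Let `C` be a simple cycle of length `n ≥ 3`.  Then
`h*(C_C; z) = (1+3z)^n − (2z)^n`, and consequently `Vol(C_C) = 4^n − 2^n`. -/
theorem hstar_simple_cycle (n : ℕ) [NeZero n] (hn : 3 ≤ n) :
    IsHStarPoly (cosmoPolytope (cycleEnds n))
      (Fintype.card (ZMod n) + Fintype.card (ZMod n) - 1)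
      ((1 + 3 * Polynomial.X) ^ n - (2 * Polynomial.X) ^ n) ∧
    (((1 + 3 * Polynomial.X) ^ n - (2 * Polynomial.X) ^ n : Polynomial ℚ)).eval 1 =
      4 ^ n - 2 ^ n := by
  exact hstar_simple_cycle_general n
end

section
/- Let n be a positive integer, let a = (a_1, …, a_n) ∈ ℤ^n with a_i ≥ 1 for all i, and let T be a multitree of type a. Then h*(C_T; z) = ∏_{i=1}^n ((1+z)^{a_i} + 2 a_i z (1+z)^{a_i−1}). -/
open Polynomial Pointwise

/-!
Write `σ` for the sum of all coordinates. The cone over the cosmological polytope of a block of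
parallel edges `B` between `v` and `c` is cut out by `x v ≤ σ`, `x c ≤ σ` and
`∑ e ∈ B, |x e| ≤ σ`. Hence rounding down in direction `v` stays inside it, and the lowest
lattice points above each `(q, y)`, where `q` is the coordinate at `c` and `y` those at `B`, exist
exactly when `-∑ y ≤ q`, and have degree `max q (∑ |y|)`. If such a block is glued to a cone `K`
along the vertex `v`, every lattice point of the sum is uniquely a lattice point of `K` plus one of
these lowest points, so the generating functions multiply. With `C = ((1 + X) / (1 - X)) ^ a`
counting `y` by `∑ |y|`, the factor of a block of `a` edges is `C / (1 - X) + X C'`, by splitting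
according to `∑ |y| ≤ q` or `q < ∑ |y|`. A tree is grown from a single vertex by repeatedly
gluing on a leaf.
-/

section GeneratingFunctions

open scoped PowerSeries
open PowerSeries (coeff)

/-- `g` is the generating function `∑ x ∈ s, X ^ d x` of the set `s` graded by `d`. As for
`HasSum`, the assertion includes that the sum makes sense: degrees are nonnegative and each degree
is attained finitely often. -/
structure HasGenFun {α R : Type*} [CommSemiring R] (s : Set α) (d : α → ℤ) (g : R⟦X⟧) : Prop where
  nonneg : ∀ x ∈ s, 0 ≤ d x
  exists_fiber : ∀ t : ℕ, ∃ F : Finset α, (∀ x, x ∈ F ↔ x ∈ s ∧ d x = t) ∧ coeff t g = F.card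

theorem neg_sum_le_sum_abs {J : Type*} [Fintype J] (y : J → ℤ) : -∑ j, y j ≤ ∑ j, |y j| :=
  (neg_le_abs _).trans (Finset.abs_sum_le_sum_abs _ _)

namespace HasGenFun

section CommSemiring

variable {α β R : Type*} [CommSemiring R] {s : Set α} {d : α → ℤ} {u : Set β} {d' : β → ℤ}
  {g g' : R⟦X⟧}

theorem of_bijOn (h : HasGenFun s d g) {f : α → β} (hf : Set.BijOn f s u)
    (hd : ∀ x ∈ s, d' (f x) = d x) : HasGenFun u d' g where
  nonneg := by
    rw [← hf.image_eq]
    rintro _ ⟨x, hx, rfl⟩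
    exact hd x hx ▸ h.nonneg x hx
  exists_fiber t := by
    classical
    obtain ⟨F, hF, hcard⟩ := h.exists_fiber t
    have hinj : Set.InjOn f F := hf.injOn.mono fun x hx => ((hF x).1 hx).1
    refine ⟨F.image f, fun y => ?_, by rw [hcard, Finset.card_image_of_injOn hinj]⟩
    simp only [Finset.mem_image, hF, ← hf.image_eq]
    constructor
    · rintro ⟨x, ⟨hx, hxt⟩, rfl⟩
      exact ⟨⟨x, hx, rfl⟩, (hd x hx).trans hxt⟩
    · rintro ⟨⟨x, hx, rfl⟩, hxt⟩
      exact ⟨x, ⟨hx, (hd x hx).symm.trans hxt⟩, rfl⟩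

theorem congr_degree (h : HasGenFun s d g) {e : α → ℤ} (he : ∀ x ∈ s, e x = d x) :
    HasGenFun s e g :=
  h.of_bijOn (Set.bijOn_id s) he

theorem union {s' : Set α} (h : HasGenFun s d g) (h' : HasGenFun s' d g') (hs : Disjoint s s') :
    HasGenFun (s ∪ s') d (g + g') where
  nonneg x hx := hx.elim (h.nonneg x) (h'.nonneg x)
  exists_fiber t := by
    classical
    obtain ⟨F, hF, hcard⟩ := h.exists_fiber t
    obtain ⟨F', hF', hcard'⟩ := h'.exists_fiber t
    have hdisj : Disjoint F F' := Finset.disjoint_left.2 fun x hx hx' =>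
      Set.disjoint_left.1 hs ((hF x).1 hx).1 ((hF' x).1 hx').1
    refine ⟨F ∪ F', fun x => ?_, ?_⟩
    · simp only [Finset.mem_union, hF, hF', Set.mem_union, or_and_right]
    · rw [map_add, hcard, hcard', Finset.card_union_of_disjoint hdisj, Nat.cast_add]

theorem prod (h : HasGenFun s d g) (h' : HasGenFun u d' g') :
    HasGenFun (s ×ˢ u) (fun p => d p.1 + d' p.2) (g * g') where
  nonneg p hp := add_nonneg (h.nonneg _ hp.1) (h'.nonneg _ hp.2)
  exists_fiber t := by
    classical
    choose F hF hcard using h.exists_fiber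
    choose F' hF' hcard' using h'.exists_fiber
    refine ⟨(Finset.HasAntidiagonal.antidiagonal t).biUnion fun k => F k.1 ×ˢ F' k.2,
      fun p => ?_, ?_⟩
    · simp only [Finset.mem_biUnion, Finset.HasAntidiagonal.mem_antidiagonal, Finset.mem_product,
        hF, hF', Set.mem_prod]
      constructor
      · rintro ⟨k, hk, ⟨hp, hpk⟩, hp', hpk'⟩
        exact ⟨⟨hp, hp'⟩, by omega⟩
      · rintro ⟨⟨hp, hp'⟩, ht⟩
        have := h.nonneg _ hp
        have := h'.nonneg _ hp'
        exact ⟨((d p.1).toNat, (d' p.2).toNat), by omega, ⟨hp, by omega⟩, hp', by omega⟩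
    · rw [Finset.card_biUnion, PowerSeries.coeff_mul]
      · simp [hcard, hcard']
      · refine fun k _ l _ hkl => Finset.disjoint_left.2 fun p hp hp' => hkl ?_
        simp only [Finset.mem_product, hF, hF'] at hp hp'
        exact Prod.ext (by omega) (by omega)

theorem pi {J : Type*} [Fintype J] (h : HasGenFun Set.univ d g) :
    HasGenFun Set.univ (fun y : J → α => ∑ j, d (y j)) (g ^ Fintype.card J) where
  nonneg y _ := Finset.sum_nonneg fun j _ => h.nonneg _ trivial
  exists_fiber t := by
    classical
    choose F hF hcard using h.exists_fiber
    refine ⟨(Finset.univ.finsuppAntidiag t).biUnion fun l => Fintype.piFinset fun j => F (l j),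
      fun y => ?_, ?_⟩
    · simp only [Finset.mem_biUnion, Finset.mem_finsuppAntidiag, Fintype.mem_piFinset, hF,
        Set.mem_univ, true_and]
      constructor
      · rintro ⟨l, ⟨rfl, -⟩, hl⟩
        simp [hl]
      · intro ht
        have hy (j) : ((d (y j)).toNat : ℤ) = d (y j) := Int.toNat_of_nonneg (h.nonneg _ trivial)
        refine ⟨Finsupp.equivFunOnFinite.symm fun j => (d (y j)).toNat,
          ⟨?_, Finset.subset_univ _⟩, fun j => (hy j).symm⟩
        simpa only [← @Nat.cast_inj ℤ, Nat.cast_sum, Finsupp.equivFunOnFinite_symm_apply_apply, hy]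
    · rw [← Finset.card_univ, ← Finset.prod_const, PowerSeries.coeff_prod, Finset.card_biUnion]
      · simp [hcard]
      · refine fun l _ l' _ hl => Finset.disjoint_left.2 fun y hy hy' => hl ?_
        simp only [Fintype.mem_piFinset, hF] at hy hy'
        ext j
        have := hy j
        have := hy' j
        omega

theorem natCast : HasGenFun Set.univ (Nat.cast : ℕ → ℤ) (PowerSeries.mk 1 : R⟦X⟧) where
  nonneg := by simp
  exists_fiber t := ⟨{t}, by simp, by simp⟩

theorem intAbs :
    HasGenFun Set.univ (fun k : ℤ => |k|) ((1 + PowerSeries.X) * PowerSeries.mk 1 : R⟦X⟧) where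
  nonneg := by simp
  exists_fiber t := by
    refine ⟨{(t : ℤ), -(t : ℤ)}, by grind, ?_⟩
    cases t with
    | zero => simp [add_mul]
    | succ t =>
      rw [add_mul, one_mul, map_add, PowerSeries.coeff_succ_X_mul, Finset.card_pair (by omega)]
      simp [one_add_one_eq_two]

end CommSemiring

section CommRing

variable {J R : Type*} [Fintype J] [CommRing R] {C : R⟦X⟧}

/- For `y` of norm `t` there are `t + ∑ y` values of `q`, and `∑ y` cancels against `∑ (-y)`: this
leaves the coefficient `t * coeff t C` of `X * C'`. -/
theorem lt_sum_abs (hC : HasGenFun Set.univ (fun y : J → ℤ => ∑ j, |y j|) C) :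
    HasGenFun {p : ℤ × (J → ℤ) | -∑ j, p.2 j ≤ p.1 ∧ p.1 < ∑ j, |p.2 j|}
      (fun p => ∑ j, |p.2 j|) (PowerSeries.X * PowerSeries.derivative R C) where
  nonneg p _ := Finset.sum_nonneg fun j _ => abs_nonneg _
  exists_fiber t := by
    classical
    obtain ⟨F, hF, hcard⟩ := hC.exists_fiber t
    simp only [Set.mem_univ, true_and] at hF
    have hcoeff : coeff t (PowerSeries.X * PowerSeries.derivative R C) = t * (F.card : R) := by
      rw [← hcard]
      cases t <;> simp [PowerSeries.coeff_succ_X_mul, PowerSeries.coeff_derivative, mul_comm]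
    have hodd : ∑ y ∈ F, ∑ j, y j = 0 := by
      refine Function.Odd.finsetSum_eq_zero (fun y => by simp) ?_
      ext y
      simp only [Finset.mem_map_equiv, Equiv.neg_symm, Equiv.neg_apply, hF, Pi.neg_apply, abs_neg]
    have hlength (y) (hy : y ∈ F) : (((t : ℤ) - -∑ j, y j).toNat : ℤ) = t + ∑ j, y j := by
      have := neg_sum_le_sum_abs y
      rw [(hF y).1 hy] at this
      omega
    refine ⟨F.biUnion fun y => Finset.Ico (-∑ j, y j) t ×ˢ {y}, fun p => ?_, ?_⟩
    · simp only [Finset.mem_biUnion, Finset.mem_product, Finset.mem_Ico, Finset.mem_singleton, hF,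
        Set.mem_ofPred_eq]
      constructor
      · rintro ⟨y, hy, hp, rfl⟩
        exact ⟨⟨hp.1, hp.2.trans_eq hy.symm⟩, hy⟩
      · rintro ⟨hp, ht⟩
        exact ⟨p.2, ht, ⟨hp.1, hp.2.trans_eq ht⟩, rfl⟩
    · rw [Finset.card_biUnion, hcoeff]
      · suffices ((∑ y ∈ F, ((t : ℤ) - -∑ j, y j).toNat : ℕ) : ℤ) = t * F.card by
          simpa only [Finset.card_product, Int.card_Ico, Finset.card_singleton, mul_one,
            Int.cast_mul, Int.cast_natCast] using (congrArg (Int.cast : ℤ → R) this).symm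
        rw [Nat.cast_sum, Finset.sum_congr rfl hlength, Finset.sum_add_distrib, hodd]
        simp [mul_comm]
      · exact fun y _ y' _ hy => Finset.disjoint_left.2 fun p hp hp' => hy <| by
          simp only [Finset.mem_product, Finset.mem_singleton] at hp hp'
          exact hp.2.symm.trans hp'.2

theorem sum_abs_le (hC : HasGenFun Set.univ (fun y : J → ℤ => ∑ j, |y j|) C) :
    HasGenFun {p : ℤ × (J → ℤ) | ∑ j, |p.2 j| ≤ p.1} Prod.fst (C * PowerSeries.mk 1) := by
  refine (hC.prod natCast).of_bijOn (f := fun p => (∑ j, |p.1 j| + p.2, p.1)) ⟨?_, ?_, ?_⟩ ?_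
  · intro p _
    simp
  · rintro ⟨y, k⟩ - ⟨y', k'⟩ - h
    simp only [Prod.mk.injEq] at h
    obtain ⟨h, rfl⟩ := h
    simpa using h
  · rintro ⟨q, y⟩ (h : ∑ j, |y j| ≤ q)
    exact ⟨(y, (q - ∑ j, |y j|).toNat), by simp, by simp [h]⟩
  · simp

end CommRing

end HasGenFun

/-- The factor `(1 + X) ^ a + 2 a X (1 + X) ^ (a - 1)` contributed to the `h^*`-polynomial by a
multiedge consisting of `a` parallel edges. -/
noncomputable def multiedgePoly (R : Type*) [CommSemiring R] (a : ℕ) : R[X] :=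
  (1 + X) ^ a + 2 * (a : R[X]) * X * (1 + X) ^ (a - 1)

section MultiedgeSeries

variable {R : Type*} [CommRing R]

theorem derivative_mk_one :
    PowerSeries.derivative R (PowerSeries.mk 1) = (PowerSeries.mk 1) ^ 2 := by
  ext t
  simp [sq, PowerSeries.coeff_derivative, PowerSeries.coeff_mul]

theorem derivative_one_add_X_mul_mk_one :
    PowerSeries.derivative R ((1 + PowerSeries.X) * PowerSeries.mk 1) =
      2 * (PowerSeries.mk 1) ^ 2 := by
  have h := PowerSeries.mk_one_mul_one_sub_eq_one R
  simp only [Derivation.leibniz, derivative_mk_one, map_add, PowerSeries.derivative_one,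
    PowerSeries.derivative_X, smul_eq_mul]
  linear_combination (-PowerSeries.mk 1) * h

theorem multiedgePoly_mul_mk_one_pow (a : ℕ) :
    (multiedgePoly R a : R⟦X⟧) * PowerSeries.mk 1 ^ (a + 1) =
      PowerSeries.X * PowerSeries.derivative R (((1 + PowerSeries.X) * PowerSeries.mk 1) ^ a) +
        ((1 + PowerSeries.X) * PowerSeries.mk 1) ^ a * PowerSeries.mk 1 := by
  have hcast (k : ℕ) : ((k : R[X]) : R⟦X⟧) = k := map_natCast coeToPowerSeries.ringHom k
  rw [PowerSeries.derivative_pow, derivative_one_add_X_mul_mk_one, multiedgePoly]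
  cases a with
  | zero => simp
  | succ a =>
    push_cast [hcast, show ((2 : R[X]) : R⟦X⟧) = 2 from hcast 2]
    simp only [mul_pow]
    ring

theorem HasGenFun.max_sum_abs (J : Type*) [Fintype J] :
    HasGenFun {p : ℤ × (J → ℤ) | -∑ j, p.2 j ≤ p.1} (fun p => max p.1 (∑ j, |p.2 j|))
      ((multiedgePoly R (Fintype.card J) : R⟦X⟧) * PowerSeries.mk 1 ^ (Fintype.card J + 1)) := by
  have hC := intAbs (R := R).pi (J := J)
  have hunion : {p : ℤ × (J → ℤ) | -∑ j, p.2 j ≤ p.1 ∧ p.1 < ∑ j, |p.2 j|} ∪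
      {p | ∑ j, |p.2 j| ≤ p.1} = {p | -∑ j, p.2 j ≤ p.1} := by
    ext p
    have := neg_sum_le_sum_abs p.2
    simp only [Set.mem_union, Set.mem_ofPred_eq]
    omega
  rw [multiedgePoly_mul_mk_one_pow, ← hunion]
  refine (hC.lt_sum_abs.congr_degree fun p hp => ?_).union
    (hC.sum_abs_le.congr_degree fun p hp => ?_) ?_
  · exact max_eq_right hp.2.le
  · exact max_eq_left hp
  · exact Set.disjoint_left.2 fun p hp hp' => hp.2.not_ge hp'

end MultiedgeSeries

end GeneratingFunctions

section LatticeCones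

/-- The lattice points of a subset of a real coordinate space. -/
def latticePoints {ι : Type*} (P : Set (ι → ℝ)) : Set (ι → ℤ) :=
  {x | (fun i => (x i : ℝ)) ∈ P}

theorem mem_latticePoints {ι : Type*} {P : Set (ι → ℝ)} {x : ι → ℤ} :
    x ∈ latticePoints P ↔ (fun i => (x i : ℝ)) ∈ P :=
  Iff.rfl

theorem mem_smul_convexHull_iff {W : Type*} [AddCommGroup W] [Module ℝ W] {s : Set W}
    (hs : s.Nonempty) (ℓ : W →ₗ[ℝ] ℝ) (hℓ : ∀ x ∈ s, ℓ x = 1) {t : ℝ} (ht : 0 ≤ t) {x : W} :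
    x ∈ t • convexHull ℝ s ↔ x ∈ PointedCone.hull ℝ s ∧ ℓ x = t := by
  have hℓ' : ∀ y ∈ convexHull ℝ s, ℓ y = 1 :=
    convexHull_min hℓ (convex_hyperplane ℓ.isLinear 1)
  have hsub : convexHull ℝ s ⊆ PointedCone.hull ℝ s :=
    convexHull_min PointedCone.subset_hull (PointedCone.convex _)
  constructor
  · rintro ⟨y, hy, rfl⟩
    exact ⟨PointedCone.smul_mem _ ht (hsub hy), by simp [hℓ' y hy]⟩
  · rintro ⟨hx, rfl⟩
    clear ht
    suffices 0 ≤ ℓ x ∧ x ∈ ℓ x • convexHull ℝ s from this.2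
    induction hx using Submodule.span_induction with
    | mem x hx =>
      rw [hℓ x hx, one_smul]
      exact ⟨zero_le_one, subset_convexHull ℝ s hx⟩
    | zero => simp [Set.zero_smul_set hs.convexHull]
    | add x y _ _ hx hy =>
      rw [map_add, (convex_convexHull ℝ s).add_smul hx.1 hy.1]
      exact ⟨add_nonneg hx.1 hy.1, Set.add_mem_add hx.2 hy.2⟩
    | smul r x _ hx =>
      have hr : ℓ (r • x) = r * ℓ x := ℓ.map_smul (r : ℝ) x
      rw [hr, mul_smul]
      exact ⟨mul_nonneg r.2 hx.1, Set.smul_mem_smul_set hx.2⟩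

theorem ehrhartSeries_convexHull {ι : Type*} [Fintype ι] {s : Set (ι → ℝ)} (hs : s.Nonempty)
    (hsum : ∀ x ∈ s, ∑ i, x i = 1) {g : PowerSeries ℚ}
    (hg : HasGenFun (latticePoints (PointedCone.hull ℝ s : Set (ι → ℝ))) (fun x => ∑ i, x i) g) :
    ehrhartSeries (convexHull ℝ s) = g := by
  have hcount (t : ℕ) : (latticePointCount (convexHull ℝ s) t : ℚ) = PowerSeries.coeff t g := by
    obtain ⟨F, hF, hcard⟩ := hg.exists_fiber t
    suffices {x : ι → ℤ | (fun i => (x i : ℝ)) ∈ (t : ℝ) • convexHull ℝ s} = F by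
      rw [latticePointCount, this, Set.ncard_coe_finset, hcard]
    ext x
    rw [Finset.mem_coe, hF, Set.mem_ofPred_eq,
      mem_smul_convexHull_iff hs (∑ i, LinearMap.proj i) (by simpa using hsum) t.cast_nonneg]
    simp only [LinearMap.coe_sum, Finset.sum_apply, LinearMap.proj_apply]
    exact and_congr Iff.rfl (by norm_cast)
  ext t
  rw [ehrhartSeries, PowerSeries.coeff_mk, ← hcount]
  split_ifs with ht
  · have : {x : ι → ℤ | (fun i => (x i : ℝ)) = 0} = {0} := by
      ext x
      simp [funext_iff]
    simp [ht, latticePointCount, Set.zero_smul_set hs.convexHull, this]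
  · rfl

variable {ι : Type*}

theorem apply_eq_zero_of_mem_hull {s : Set (ι → ℝ)} {i : ι} (hs : ∀ x ∈ s, x i = 0)
    {x : ι → ℝ} (hx : x ∈ PointedCone.hull ℝ s) : x i = 0 := by
  induction hx using Submodule.span_induction with
  | mem x hx => exact hs x hx
  | zero => rfl
  | add x y _ _ hx hy => simp [hx, hy]
  | smul r x _ hx => simp [hx]

theorem sublinear_le_of_mem_hull {W : Type*} [AddCommGroup W] [Module ℝ W] {s : Set W} {N : W → ℝ}
    (hadd : ∀ x y, N (x + y) ≤ N x + N y) (hsmul : ∀ r : ℝ, 0 ≤ r → ∀ x, N (r • x) = r * N x)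
    (ℓ : W →ₗ[ℝ] ℝ) (hs : ∀ x ∈ s, N x ≤ ℓ x) {x : W} (hx : x ∈ PointedCone.hull ℝ s) :
    N x ≤ ℓ x := by
  induction hx using Submodule.span_induction with
  | mem x hx => exact hs x hx
  | zero => simpa using (hsmul 0 le_rfl 0).le
  | add x y _ _ hx hy =>
    rw [map_add]
    exact (hadd x y).trans (add_le_add hx hy)
  | smul r x _ hx =>
    have hr : ℓ (r • x) = r * ℓ x := ℓ.map_smul (r : ℝ) x
    rw [hr]
    exact (hsmul r r.2 x).trans_le (mul_le_mul_of_nonneg_left hx r.2)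

theorem HasGenFun.latticePoints_hull_single [Fintype ι] [DecidableEq ι] {R : Type*}
    [CommSemiring R] (i : ι) :
    HasGenFun (latticePoints (PointedCone.hull ℝ {(Pi.single i 1 : ι → ℝ)} : Set (ι → ℝ)))
      (fun x => ∑ i, x i) (PowerSeries.mk 1 : PowerSeries R) := by
  refine natCast.of_bijOn (f := fun k => (Pi.single i (k : ℤ) : ι → ℤ)) ⟨?_, ?_, ?_⟩ (by simp)
  · intro k _
    refine Submodule.mem_span_singleton.2 ⟨⟨k, k.cast_nonneg⟩, funext fun j => ?_⟩
    change (k : ℝ) * Pi.single (M := fun _ => ℝ) i 1 j = ((Pi.single i (k : ℤ) : ι → ℤ) j : ℝ)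
    by_cases hj : j = i
    · subst hj
      simp
    · simp [hj]
  · intro k _ l _ h
    simpa using congrFun h i
  · intro x hx
    obtain ⟨⟨r, hr⟩, hrx⟩ :=
      Submodule.mem_span_singleton.1 (show _ ∈ PointedCone.hull ℝ _ from hx)
    have happ (j) : r * Pi.single (M := fun _ => ℝ) i 1 j = x j := congrFun hrx j
    refine ⟨(x i).toNat, trivial, ?_⟩
    ext j
    by_cases hj : j = i
    · subst hj
      have hxj : r = x j := by simpa using happ j
      have hx0 : 0 ≤ x j := by exact_mod_cast hr.trans_eq hxj
      simpa using hx0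
    · simpa [hj, eq_comm] using happ j

/-- The family `f` of lattice points of the cone `L`, indexed by `U`, picks the least lattice point
on each line in direction `e_v` that meets `L` and is integral off `v`: any point of `L` on such a
line lies above a unique `f p`. Thus rounding down in direction `e_v` stays inside `L`. -/
structure IsIntegralFloor {β : Type*} [DecidableEq ι] (L : PointedCone ℝ (ι → ℝ)) (v : ι)
    (U : Set β) (f : β → ι → ℤ) : Prop where
  mem : ∀ p ∈ U, f p ∈ latticePoints (L : Set (ι → ℝ))
  injective : ∀ p ∈ U, ∀ p' ∈ U, (∀ i ≠ v, f p i = f p' i) → p = p'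
  exists_floor : ∀ x ∈ L, (∀ i ≠ v, ∃ k : ℤ, x i = k) →
    ∃ p ∈ U, ∃ r : ℝ, 0 ≤ r ∧ x = Pi.single v r + fun i => (f p i : ℝ)

/- If `x + y` is a lattice point with `x ∈ K` and `y ∈ L`, then `y` is integral off the only shared
coordinate `v`, so that the excess of `y` over its floor can be moved to `x`. -/
theorem IsIntegralFloor.exists_add_of_mem_sup [DecidableEq ι] {β : Type*}
    {K L : PointedCone ℝ (ι → ℝ)} {A : Set ι} {v : ι} {U : Set β} {f : β → ι → ℤ}
    (hf : IsIntegralFloor L v U f) (hKA : ∀ x ∈ K, ∀ i ∉ A, x i = 0)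
    (hLA : ∀ x ∈ L, ∀ i ∈ A, i ≠ v → x i = 0) (hv : Pi.single v 1 ∈ K) {w : ι → ℤ}
    (hw : w ∈ latticePoints ((K ⊔ L : PointedCone ℝ (ι → ℝ)) : Set (ι → ℝ))) :
    ∃ x ∈ latticePoints (K : Set (ι → ℝ)), ∃ p ∈ U, x + f p = w := by
  obtain ⟨x, hx, y, hy, hxy⟩ := Submodule.mem_sup.1 (show _ ∈ K ⊔ L from hw)
  have happ (i) : x i + y i = w i := congrFun hxy i
  have hint : ∀ i ≠ v, ∃ k : ℤ, y i = k := fun i hi => by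
    by_cases hA : i ∈ A
    · exact ⟨0, by simp [hLA y hy i hA hi]⟩
    · exact ⟨w i, by simpa [hKA x hx i hA] using happ i⟩
  obtain ⟨p, hp, r, hr, rfl⟩ := hf.exists_floor y hy hint
  refine ⟨w - f p, ?_, p, hp, sub_add_cancel _ _⟩
  have hmem : x + r • Pi.single v 1 ∈ K := K.add_mem hx (PointedCone.smul_mem _ hr hv)
  rw [mem_latticePoints, SetLike.mem_coe]
  convert hmem using 1
  ext i
  have hi : x i + ((Pi.single v r : ι → ℝ) i + f p i) = w i := happ i
  rw [← Pi.single_smul, smul_eq_mul, mul_one, Pi.add_apply]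
  change ((w i - f p i : ℤ) : ℝ) = _
  push_cast
  linarith

theorem HasGenFun.latticePoints_sup [Fintype ι] [DecidableEq ι] {β R : Type*} [CommSemiring R]
    {K L : PointedCone ℝ (ι → ℝ)} {A : Set ι} {v : ι} {U : Set β} {f : β → ι → ℤ}
    {g g' : PowerSeries R}
    (hK : HasGenFun (latticePoints (K : Set (ι → ℝ))) (fun x => ∑ i, x i) g)
    (hU : HasGenFun U (fun p => ∑ i, f p i) g') (hf : IsIntegralFloor L v U f)
    (hKA : ∀ x ∈ K, ∀ i ∉ A, x i = 0) (hLA : ∀ x ∈ L, ∀ i ∈ A, i ≠ v → x i = 0)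
    (hv : Pi.single v 1 ∈ K) :
    HasGenFun (latticePoints ((K ⊔ L : PointedCone ℝ (ι → ℝ)) : Set (ι → ℝ)))
      (fun x => ∑ i, x i) (g * g') := by
  refine (hK.prod hU).of_bijOn (f := fun q => q.1 + f q.2) ⟨?_, ?_, ?_⟩ ?_
  · rintro ⟨x, p⟩ ⟨hx, hp⟩
    rw [mem_latticePoints, SetLike.mem_coe]
    convert Submodule.add_mem_sup (show _ ∈ K from hx) (show _ ∈ L from hf.mem p hp) using 1
    ext i
    simp
  · rintro ⟨x, p⟩ ⟨hx, hp⟩ ⟨x', p'⟩ ⟨hx', hp'⟩ h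
    have happ (i) : x i + f p i = x' i + f p' i := congrFun h i
    obtain rfl : p = p' := hf.injective p hp p' hp' fun i hi => by
      by_cases hA : i ∈ A
      · have h1 := hLA _ (hf.mem p hp) i hA hi
        have h2 := hLA _ (hf.mem p' hp') i hA hi
        exact_mod_cast h1.trans h2.symm
      · have h1 : (x i : ℝ) = 0 := hKA _ hx i hA
        have h2 : (x' i : ℝ) = 0 := hKA _ hx' i hA
        have := happ i
        norm_cast at h1 h2
        omega
    simpa using h
  · intro w hw
    obtain ⟨x, hx, p, hp, hxp⟩ := hf.exists_add_of_mem_sup hKA hLA hv hw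
    exact ⟨(x, p), ⟨hx, hp⟩, hxp⟩
  · simp [Finset.sum_add_distrib]

end LatticeCones

section BlockCone

variable {ι : Type*} [DecidableEq ι] {v c : ι} {B : Finset ι}

/-- The three vertices of the cosmological polytope that come from an edge with endpoints `v`
and `c`, when `e` indexes the coordinate of the edge. -/
def edgeGens (v c e : ι) : Set (ι → ℝ) :=
  {Pi.single v 1 + Pi.single c 1 - Pi.single e 1, Pi.single v 1 - Pi.single c 1 + Pi.single e 1,
    -Pi.single v 1 + Pi.single c 1 + Pi.single e 1}

theorem edgeGens_comm (v c e : ι) : edgeGens v c e = edgeGens c v e := by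
  have hswap (i j : ι) : (Pi.single i 1 : ι → ℝ) - Pi.single j 1 + Pi.single e 1 =
      -Pi.single j 1 + Pi.single i 1 + Pi.single e 1 := by abel
  rw [edgeGens, edgeGens, hswap, hswap, add_comm (Pi.single v 1), Set.pair_comm]

theorem sum_eq_one_of_mem_edgeGens [Fintype ι] {e : ι} {x : ι → ℝ} (hx : x ∈ edgeGens v c e) :
    ∑ i, x i = 1 := by
  obtain rfl | rfl | rfl := hx <;> simp [Finset.sum_add_distrib]

theorem apply_eq_zero_of_mem_edgeGens {e i : ι} {x : ι → ℝ} (hx : x ∈ edgeGens v c e)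
    (hv : i ≠ v) (hc : i ≠ c) (he : i ≠ e) : x i = 0 := by
  obtain rfl | rfl | rfl := hx <;> simp [hv, hc, he]

/-- The cone over the cosmological polytope of the graph with vertices `v` and `c` joined by the
parallel edges `e ∈ B`. -/
def blockCone (v c : ι) (B : Finset ι) : PointedCone ℝ (ι → ℝ) :=
  PointedCone.hull ℝ (⋃ e ∈ B, edgeGens v c e)

theorem mem_blockCone_of_mem_edgeGens {e : ι} (he : e ∈ B) {x : ι → ℝ} (hx : x ∈ edgeGens v c e) :
    x ∈ blockCone v c B :=
  PointedCone.subset_hull (Set.mem_biUnion he hx)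

theorem smul_sub_add_single_mem_blockCone {e : ι} (he : e ∈ B) {s : ℝ} (hs : |s| ≤ 1) :
    s • (Pi.single c 1 - Pi.single v 1) + Pi.single e 1 ∈ blockCone v c B := by
  obtain ⟨h1, h2⟩ := abs_le.1 hs
  have hminus : Pi.single v 1 - Pi.single c 1 + Pi.single e 1 ∈ blockCone v c B :=
    mem_blockCone_of_mem_edgeGens he (.inr (.inl rfl))
  have hplus : -Pi.single v 1 + Pi.single c 1 + Pi.single e 1 ∈ blockCone v c B :=
    mem_blockCone_of_mem_edgeGens he (.inr (.inr rfl))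
  convert (blockCone v c B).add_mem
    (PointedCone.smul_mem _ (show 0 ≤ (1 - s) / 2 by linarith) hminus)
    (PointedCone.smul_mem _ (show 0 ≤ (1 + s) / 2 by linarith) hplus) using 1
  module

theorem single_mem_blockCone_left (hB : B.Nonempty) : Pi.single v 1 ∈ blockCone v c B := by
  obtain ⟨e, he⟩ := hB
  convert PointedCone.smul_mem _ (show (0 : ℝ) ≤ 1 / 2 by norm_num) <| (blockCone v c B).add_mem
    (mem_blockCone_of_mem_edgeGens he (.inl rfl))
    (mem_blockCone_of_mem_edgeGens he (.inr (.inl rfl))) using 1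
  module

theorem blockCone_comm (v c : ι) (B : Finset ι) : blockCone v c B = blockCone c v B := by
  simp only [blockCone, edgeGens_comm v c]

theorem single_mem_blockCone_right (hB : B.Nonempty) : Pi.single c 1 ∈ blockCone v c B :=
  blockCone_comm c v B ▸ single_mem_blockCone_left hB

theorem apply_eq_zero_of_mem_blockCone {x : ι → ℝ} (hx : x ∈ blockCone v c B) {i : ι}
    (hi : i ∉ insert v (insert c B)) : x i = 0 := by
  simp only [Finset.mem_insert, not_or] at hi
  refine apply_eq_zero_of_mem_hull (fun y hy => ?_) hx
  obtain ⟨e, he, hy⟩ := Set.mem_iUnion₂.1 hy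
  exact apply_eq_zero_of_mem_edgeGens hy hi.1 hi.2.1 (ne_of_mem_of_not_mem he hi.2.2).symm

theorem sum_univ_eq_of_eq_zero [Fintype ι] {M : Type*} [AddCommMonoid M] (hvc : v ≠ c) (hv : v ∉ B)
    (hc : c ∉ B) {F : ι → M} (hF : ∀ i ∉ insert v (insert c B), F i = 0) :
    ∑ i, F i = F v + F c + ∑ e ∈ B, F e := by
  rw [← Finset.sum_subset (Finset.subset_univ _) fun i _ => hF i,
    Finset.sum_insert (by simp [hvc, hv]), Finset.sum_insert hc, add_assoc]

theorem eq_smul_single_add_sum {R : Type*} [Semiring R] (hvc : v ≠ c) (hv : v ∉ B) (hc : c ∉ B)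
    {x : ι → R} (hsupp : ∀ i ∉ insert v (insert c B), x i = 0) :
    x = x v • Pi.single v 1 + x c • Pi.single c 1 + ∑ e ∈ B, x e • Pi.single e 1 := by
  ext i
  have := hsupp i
  simp only [Pi.add_apply, Pi.smul_apply, Finset.sum_apply, Pi.single_apply, smul_eq_mul, mul_ite,
    mul_one, mul_zero, Finset.sum_ite_eq]
  grind

theorem ineqs_of_mem_blockCone [Fintype ι] (hvc : v ≠ c) (hv : v ∉ B) (hc : c ∉ B) {x : ι → ℝ}
    (hx : x ∈ blockCone v c B) :
    x v ≤ ∑ i, x i ∧ x c ≤ ∑ i, x i ∧ ∑ e ∈ B, |x e| ≤ ∑ i, x i := by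
  let ℓ : (ι → ℝ) →ₗ[ℝ] ℝ := ∑ i, LinearMap.proj i
  have hℓ (y : ι → ℝ) : ℓ y = ∑ i, y i := by simp [ℓ]
  rw [← hℓ]
  have hgen (y) (hy : y ∈ ⋃ e ∈ B, edgeGens v c e) :
      y v ≤ ℓ y ∧ y c ≤ ℓ y ∧ ∑ e ∈ B, |y e| ≤ ℓ y := by
    obtain ⟨e, he, hy⟩ := Set.mem_iUnion₂.1 hy
    have hev : e ≠ v := ne_of_mem_of_not_mem he hv
    have hec : e ≠ c := ne_of_mem_of_not_mem he hc
    rw [hℓ, sum_eq_one_of_mem_edgeGens hy, Finset.sum_eq_single_of_mem e he fun e' he' hne => by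
      rw [apply_eq_zero_of_mem_edgeGens hy (ne_of_mem_of_not_mem he' hv)
        (ne_of_mem_of_not_mem he' hc) hne, abs_zero]]
    obtain rfl | rfl | rfl := hy <;> simp [hvc, hvc.symm, hev, hec, hev.symm, hec.symm]
  refine ⟨sublinear_le_of_mem_hull (N := fun y => y v) ?_ ?_ ℓ (fun y hy => (hgen y hy).1) hx,
    sublinear_le_of_mem_hull (N := fun y => y c) ?_ ?_ ℓ (fun y hy => (hgen y hy).2.1) hx,
    sublinear_le_of_mem_hull (N := fun y => ∑ e ∈ B, |y e|) ?_ ?_ ℓ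
      (fun y hy => (hgen y hy).2.2) hx⟩
  · simp
  · simp
  · simp
  · simp
  · intro y z
    rw [← Finset.sum_add_distrib]
    exact Finset.sum_le_sum fun e _ => abs_add_le _ _
  · intro r hr y
    simp [Finset.mul_sum, abs_mul, abs_of_nonneg hr]

theorem mem_blockCone_of_ineqs [Fintype ι] (hvc : v ≠ c) (hv : v ∉ B) (hc : c ∉ B) (hB : B.Nonempty)
    {x : ι → ℝ} (hsupp : ∀ i ∉ insert v (insert c B), x i = 0) (hxv : x v ≤ ∑ i, x i)
    (hxc : x c ≤ ∑ i, x i) (hxB : ∑ e ∈ B, |x e| ≤ ∑ i, x i) : x ∈ blockCone v c B := by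
  /- Each `x e` is spread over the generators of `e` of the same sign, which leaves the weights
  `x v - m` and `x c - m` at `v` and `c`. The choice between the two generators with positive
  `e`-coordinate moves a weight `δ` with `|δ| ≤ p` from `c` to `v` to make both nonnegative. -/
  set m := ∑ e ∈ B, (x e)⁻ with hm
  set p := ∑ e ∈ B, (x e)⁺ with hp
  have hsub : ∑ e ∈ B, x e = p - m := by
    simp only [hm, hp, ← Finset.sum_sub_distrib, posPart_sub_negPart]
  have habs : ∑ e ∈ B, |x e| = p + m := by
    simp only [hm, hp, ← Finset.sum_add_distrib, posPart_add_negPart]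
  have hp0 : 0 ≤ p := Finset.sum_nonneg fun e _ => posPart_nonneg _
  rw [sum_univ_eq_of_eq_zero hvc hv hc hsupp, hsub] at hxv hxc hxB
  obtain ⟨δ, hδ, hδv, hδc⟩ : ∃ δ, |δ| ≤ p ∧ 0 ≤ x v - m + δ ∧ 0 ≤ x c - m - δ :=
    ⟨max (m - x v) (-p), by grind, by grind, by grind⟩
  have hδp : p * (δ / p) = δ :=
    mul_div_cancel_of_imp' fun h => by simpa [h] using hδ
  have hx : x = (x v - m + δ) • Pi.single v 1 + (x c - m - δ) • Pi.single c 1 +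
      ∑ e ∈ B, (x e)⁺ • ((δ / p) • (Pi.single c 1 - Pi.single v 1) + Pi.single e 1) +
      ∑ e ∈ B, (x e)⁻ • (Pi.single v 1 + Pi.single c 1 - Pi.single e 1) := by
    nth_rw 1 [eq_smul_single_add_sum hvc hv hc hsupp]
    have hsplit : ∑ e ∈ B, x e • Pi.single e (1 : ℝ) =
        ∑ e ∈ B, (x e)⁺ • Pi.single e 1 - ∑ e ∈ B, (x e)⁻ • Pi.single e 1 := by
      simp only [← Finset.sum_sub_distrib, ← sub_smul, posPart_sub_negPart]
    simp only [smul_add, smul_sub, Finset.sum_add_distrib, Finset.sum_sub_distrib,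
      ← Finset.sum_smul, smul_smul, ← Finset.sum_mul, ← hm, ← hp, hδp, hsplit]
    module
  rw [hx]
  refine add_mem (add_mem (add_mem ?_ ?_) (sum_mem fun e he => ?_)) (sum_mem fun e he => ?_)
  · exact PointedCone.smul_mem _ hδv (single_mem_blockCone_left hB)
  · exact PointedCone.smul_mem _ hδc (single_mem_blockCone_right hB)
  · refine PointedCone.smul_mem _ (posPart_nonneg _) (smul_sub_add_single_mem_blockCone he ?_)
    rw [abs_div, abs_of_nonneg hp0]
    exact div_le_one_of_le₀ hδ hp0
  · exact PointedCone.smul_mem _ (negPart_nonneg _) (mem_blockCone_of_mem_edgeGens he (.inl rfl))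

/-- The lattice point of `blockCone v c B` with `c`-coordinate `q` and `B`-coordinates `y` that has
the least possible `v`-coordinate, where `p = (q, y)`. -/
def floorPoint (v c : ι) (B : Finset ι) (p : ℤ × (B → ℤ)) (i : ι) : ℤ :=
  if i = v then max p.1 (∑ e, |p.2 e|) - p.1 - ∑ e, p.2 e
  else if i = c then p.1
  else if h : i ∈ B then p.2 ⟨i, h⟩ else 0

variable {p : ℤ × (B → ℤ)}

theorem floorPoint_left : floorPoint v c B p v = max p.1 (∑ e, |p.2 e|) - p.1 - ∑ e, p.2 e :=
  if_pos rfl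

theorem floorPoint_right (hvc : v ≠ c) : floorPoint v c B p c = p.1 := by
  rw [floorPoint, if_neg hvc.symm, if_pos rfl]

theorem floorPoint_coe (hv : v ∉ B) (hc : c ∉ B) (e : B) : floorPoint v c B p e = p.2 e := by
  rw [floorPoint, if_neg (ne_of_mem_of_not_mem e.2 hv), if_neg (ne_of_mem_of_not_mem e.2 hc),
    dif_pos e.2]

theorem floorPoint_eq_zero {i : ι} (hi : i ∉ insert v (insert c B)) : floorPoint v c B p i = 0 := by
  simp only [Finset.mem_insert, not_or] at hi
  rw [floorPoint, if_neg hi.1, if_neg hi.2.1, dif_neg hi.2.2]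

theorem sum_floorPoint [Fintype ι] (hvc : v ≠ c) (hv : v ∉ B) (hc : c ∉ B) :
    ∑ i, floorPoint v c B p i = max p.1 (∑ e, |p.2 e|) := by
  rw [sum_univ_eq_of_eq_zero hvc hv hc fun i => floorPoint_eq_zero, ← Finset.sum_coe_sort B]
  simp only [floorPoint_left, floorPoint_right hvc, floorPoint_coe hv hc]
  ring

theorem eq_single_add_floorPoint (hvc : v ≠ c) (hv : v ∉ B) (hc : c ∉ B) {x : ι → ℝ}
    (hsupp : ∀ i ∉ insert v (insert c B), x i = 0) (hxc : x c = p.1) (hxB : ∀ e : B, x e = p.2 e) :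
    x = Pi.single v (x v - floorPoint v c B p v) + fun i => (floorPoint v c B p i : ℝ) := by
  ext i
  rw [Pi.add_apply]
  obtain rfl | hiv := eq_or_ne i v
  · rw [Pi.single_eq_same, sub_add_cancel]
  rw [Pi.single_eq_of_ne hiv, zero_add]
  obtain rfl | hic := eq_or_ne i c
  · rw [floorPoint_right hvc, hxc]
  by_cases hiB : i ∈ B
  · exact (hxB ⟨i, hiB⟩).trans (congrArg _ (floorPoint_coe hv hc ⟨i, hiB⟩).symm)
  · have hi : i ∉ insert v (insert c B) := by simp [hiv, hic, hiB]
    rw [hsupp i hi, floorPoint_eq_zero hi, Int.cast_zero]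

theorem isIntegralFloor_floorPoint [Finite ι] (hvc : v ≠ c) (hv : v ∉ B) (hc : c ∉ B)
    (hB : B.Nonempty) :
    IsIntegralFloor (blockCone v c B) v {p : ℤ × (B → ℤ) | -∑ e, p.2 e ≤ p.1}
      (floorPoint v c B) where
  mem p (hp : -∑ e, p.2 e ≤ p.1) := by
    cases nonempty_fintype ι
    refine mem_blockCone_of_ineqs hvc hv hc hB (fun i hi => by simp [floorPoint_eq_zero hi])
      ?_ ?_ ?_
    · norm_cast
      rw [sum_floorPoint hvc hv hc, floorPoint_left]
      omega
    · norm_cast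
      rw [sum_floorPoint hvc hv hc, floorPoint_right hvc]
      exact le_max_left _ _
    · norm_cast
      rw [sum_floorPoint hvc hv hc, ← Finset.sum_coe_sort B]
      simp only [floorPoint_coe hv hc]
      exact le_max_right _ _
  injective p _ p' _ h := by
    refine Prod.ext ?_ (funext fun e => ?_)
    · simpa only [floorPoint_right hvc] using h c hvc.symm
    · simpa only [floorPoint_coe hv hc] using h e (ne_of_mem_of_not_mem e.2 hv)
  exists_floor x hx hint := by
    cases nonempty_fintype ι
    obtain ⟨hxv, hxc, hxB⟩ := ineqs_of_mem_blockCone hvc hv hc hx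
    have hsupp (i) := apply_eq_zero_of_mem_blockCone hx (i := i)
    obtain ⟨q, hq⟩ := hint c hvc.symm
    choose y hy using fun e : B => hint e (ne_of_mem_of_not_mem e.2 hv)
    simp only [sum_univ_eq_of_eq_zero hvc hv hc hsupp, ← Finset.sum_coe_sort B, hq, hy]
      at hxv hxc hxB
    refine ⟨(q, y), ?_, x v - floorPoint v c B (q, y) v, ?_,
      eq_single_add_floorPoint hvc hv hc hsupp hq hy⟩
    · have : -∑ e, (y e : ℝ) ≤ q := by linarith
      exact_mod_cast this
    · rw [floorPoint_left]
      have : max (q : ℝ) (∑ e, |(y e : ℝ)|) ≤ x v + q + ∑ e, (y e : ℝ) := max_le hxc hxB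
      push_cast
      linarith

theorem HasGenFun.latticePoints_sup_blockCone [Fintype ι] {R : Type*} [CommRing R]
    {K : PointedCone ℝ (ι → ℝ)} {A : Set ι} {g : PowerSeries R}
    (hK : HasGenFun (latticePoints (K : Set (ι → ℝ))) (fun x => ∑ i, x i) g)
    (hKA : ∀ x ∈ K, ∀ i ∉ A, x i = 0) (hvK : Pi.single v 1 ∈ K) (hvA : v ∈ A) (hcA : c ∉ A)
    (hBA : ∀ e ∈ B, e ∉ A) (hc : c ∉ B) (hB : B.Nonempty) :
    HasGenFun (latticePoints ((K ⊔ blockCone v c B : PointedCone ℝ (ι → ℝ)) : Set (ι → ℝ)))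
      (fun x => ∑ i, x i)
      (g * ((multiedgePoly R B.card : PowerSeries R) * PowerSeries.mk 1 ^ (B.card + 1))) := by
  have hvc : v ≠ c := ne_of_mem_of_not_mem hvA hcA
  have hv : v ∉ B := fun h => hBA v h hvA
  have hfloor : HasGenFun {p : ℤ × (B → ℤ) | -∑ e, p.2 e ≤ p.1}
      (fun p => ∑ i, floorPoint v c B p i)
      ((multiedgePoly R B.card : PowerSeries R) * PowerSeries.mk 1 ^ (B.card + 1)) := by
    simpa only [sum_floorPoint hvc hv hc, Fintype.card_coe] using HasGenFun.max_sum_abs B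
  refine hK.latticePoints_sup hfloor (isIntegralFloor_floorPoint hvc hv hc hB) hKA ?_ hvK
  refine fun x hx i hi hiv => apply_eq_zero_of_mem_blockCone hx ?_
  simp only [Finset.mem_insert, not_or]
  exact ⟨hiv, ne_of_mem_of_not_mem hi hcA, fun h => hBA i h hi⟩

end BlockCone

section Multitree

theorem isTree_leaf_induction {V : Type*} [Fintype V] [DecidableEq V] {T : SimpleGraph V}
    [DecidableRel T.Adj] (hT : T.IsTree) {P : Finset V → Finset (Sym2 V) → Prop} (r : V)
    (base : P {r} ∅)
    (step : ∀ W S v c, (∀ e ∈ S, ∀ w ∈ e, w ∈ W) → v ∈ W → c ∉ W → T.Adj v c → P W S →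
      P (insert c W) (insert s(v, c) S)) :
    P Finset.univ T.edgeFinset := by
  have hgrow (k : ℕ) (hk : k < Fintype.card V) : ∃ W S, r ∈ W ∧ W.card = k + 1 ∧
      S ⊆ T.edgeFinset ∧ S.card = k ∧ (∀ e ∈ S, ∀ w ∈ e, w ∈ W) ∧ P W S := by
    induction k with
    | zero => exact ⟨{r}, ∅, by simp [base]⟩
    | succ k ih =>
      obtain ⟨W, S, hr, hW, hST, hS, hclosed, hP⟩ := ih (by omega)
      obtain ⟨u, hu⟩ : ∃ u, u ∉ W := by
        by_contra! h
        exact hk.ne (by rw [← hW, Finset.eq_univ_of_forall h, Finset.card_univ])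
      obtain ⟨p⟩ := hT.connected.preconnected r u
      obtain ⟨⟨⟨v, c⟩, hadj⟩, -, hv, hc⟩ := p.exists_boundary_dart W hr hu
      rw [Finset.mem_coe] at hv hc
      have hnew : s(v, c) ∉ S := fun h => hc (hclosed _ h c (Sym2.mem_mk_right v c))
      refine ⟨insert c W, insert s(v, c) S, Finset.mem_insert_of_mem hr, ?_, ?_, ?_, ?_,
        step W S v c hclosed hv hc hadj hP⟩
      · rw [Finset.card_insert_of_notMem hc, hW]
      · exact Finset.insert_subset (SimpleGraph.mem_edgeFinset.2 hadj) hST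
      · rw [Finset.card_insert_of_notMem hnew, hS]
      · intro e he w hw
        obtain rfl | he := Finset.mem_insert.1 he
        · obtain rfl | rfl := Sym2.mem_iff.1 hw
          · exact Finset.mem_insert_of_mem hv
          · exact Finset.mem_insert_self _ _
        · exact Finset.mem_insert_of_mem (hclosed e he w hw)
  have hcard := hT.card_edgeFinset
  obtain ⟨W, S, -, hW, hST, hS, -, hP⟩ := hgrow T.edgeFinset.card (by omega)
  rwa [← Finset.eq_univ_of_card W (by omega), ← Finset.eq_of_subset_of_card_le hST hS.ge]

section ParallelEdges

variable {V E : Type*} [DecidableEq V] [Fintype E]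

/-- The coordinates of the edges of the multigraph `ends` whose pair of endpoints is `e`. -/
def parallelEdges (ends : E → Sym2 V) (e : Sym2 V) : Finset (V ⊕ E) :=
  Finset.map Function.Embedding.inr {f | ends f = e}

variable {ends : E → Sym2 V}

theorem inr_mem_parallelEdges {f : E} {e : Sym2 V} :
    Sum.inr f ∈ parallelEdges ends e ↔ ends f = e := by
  simp [parallelEdges]

theorem inl_notMem_parallelEdges {v : V} {e : Sym2 V} :
    Sum.inl v ∉ parallelEdges ends e := by
  simp [parallelEdges]

theorem card_parallelEdges (e : Sym2 V) :
    (parallelEdges ends e).card = Finset.card {f | ends f = e} :=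
  Finset.card_map _

end ParallelEdges

variable {V E : Type*} [DecidableEq V] [DecidableEq E] (ends : E → Sym2 V)

/-- The cone over the cosmological polytope of the subgraph of the multigraph `ends` with vertex
set `W` and all edges whose pair of endpoints is in `S`. The rays spanned by the vertices are
included explicitly, so that isolated vertices are allowed. -/
def subgraphCone (W : Finset V) (S : Finset (Sym2 V)) : PointedCone ℝ (V ⊕ E → ℝ) :=
  PointedCone.hull ℝ ({x | ∃ w ∈ W, x = Pi.single (Sum.inl w) 1} ∪
    {x | ∃ f i j, ends f ∈ S ∧ ends f = s(i, j) ∧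
      x ∈ edgeGens (Sum.inl i) (Sum.inl j) (Sum.inr f)})

/-- The coordinates of the vertices in `W` and of the edges of the multigraph `ends` whose pair of
endpoints is in `S`. -/
def subgraphCoords (W : Finset V) (S : Finset (Sym2 V)) : Set (V ⊕ E) :=
  {i | Sum.elim (· ∈ W) (ends · ∈ S) i}

variable {ends}

theorem single_inl_mem_subgraphCone {W : Finset V} {S : Finset (Sym2 V)} {w : V} (hw : w ∈ W) :
    Pi.single (Sum.inl w) 1 ∈ subgraphCone ends W S :=
  PointedCone.subset_hull (.inl ⟨w, hw, rfl⟩)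

theorem mem_subgraphCone_of_mem_edgeGens {W : Finset V} {S : Finset (Sym2 V)} {f : E} {i j : V}
    (hf : ends f ∈ S) (hij : ends f = s(i, j)) {x : V ⊕ E → ℝ}
    (hx : x ∈ edgeGens (Sum.inl i) (Sum.inl j) (Sum.inr f)) : x ∈ subgraphCone ends W S :=
  PointedCone.subset_hull (.inr ⟨f, i, j, hf, hij, hx⟩)

theorem apply_eq_zero_of_mem_subgraphCone {W : Finset V} {S : Finset (Sym2 V)}
    (hclosed : ∀ e ∈ S, ∀ w ∈ e, w ∈ W) {x : V ⊕ E → ℝ} (hx : x ∈ subgraphCone ends W S)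
    {k : V ⊕ E} (hk : k ∉ subgraphCoords ends W S) : x k = 0 := by
  have hW (w : V) (hw : w ∈ W) : k ≠ Sum.inl w := by
    rintro rfl
    exact hk hw
  refine apply_eq_zero_of_mem_hull ?_ hx
  rintro y (⟨w, hw, rfl⟩ | ⟨f, i, j, hf, hij, hy⟩)
  · exact Pi.single_eq_of_ne (hW w hw) 1
  · refine apply_eq_zero_of_mem_edgeGens hy (hW i ?_) (hW j ?_) ?_
    · exact hclosed _ hf i (hij ▸ Sym2.mem_mk_left i j)
    · exact hclosed _ hf j (hij ▸ Sym2.mem_mk_right i j)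
    · rintro rfl
      exact hk hf

theorem subgraphCone_insert [Fintype E] {v c : V} (hB : (parallelEdges ends s(v, c)).Nonempty)
    {W : Finset V} (hv : v ∈ W) (S : Finset (Sym2 V)) :
    subgraphCone ends (insert c W) (insert s(v, c) S) = subgraphCone ends W S ⊔
      blockCone (Sum.inl v) (Sum.inl c) (parallelEdges ends s(v, c)) := by
  apply le_antisymm
  · refine Submodule.span_le.2 ?_
    rintro x (⟨w, hw, rfl⟩ | ⟨f, i, j, hf, hij, hx⟩)
    · obtain rfl | hw := Finset.mem_insert.1 hw
      · exact Submodule.mem_sup_right (single_mem_blockCone_right hB)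
      · exact Submodule.mem_sup_left (single_inl_mem_subgraphCone hw)
    · obtain hf | hf := Finset.mem_insert.1 hf
      · refine Submodule.mem_sup_right
          (mem_blockCone_of_mem_edgeGens (inr_mem_parallelEdges.2 hf) ?_)
        obtain ⟨rfl, rfl⟩ | ⟨rfl, rfl⟩ := Sym2.eq_iff.1 (hij.symm.trans hf)
        · exact hx
        · rwa [edgeGens_comm]
      · exact Submodule.mem_sup_left (mem_subgraphCone_of_mem_edgeGens hf hij hx)
  · refine sup_le (Submodule.span_le.2 ?_) (Submodule.span_le.2 ?_)
    · rintro x (⟨w, hw, rfl⟩ | ⟨f, i, j, hf, hij, hx⟩)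
      · exact single_inl_mem_subgraphCone (Finset.mem_insert_of_mem hw)
      · exact mem_subgraphCone_of_mem_edgeGens (Finset.mem_insert_of_mem hf) hij hx
    · intro x hx
      obtain ⟨e, he, hx⟩ := Set.mem_iUnion₂.1 hx
      obtain ⟨f, hf, rfl⟩ := Finset.mem_map.1 he
      have hf : ends f = s(v, c) := (Finset.mem_filter.1 hf).2
      exact mem_subgraphCone_of_mem_edgeGens (hf ▸ Finset.mem_insert_self _ _) hf hx

theorem hull_cosmoVertices [Fintype V] (hends : ∀ v, ∃ f, v ∈ ends f) {S : Finset (Sym2 V)}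
    (hS : ∀ f, ends f ∈ S) :
    PointedCone.hull ℝ (cosmoVertices ends) = subgraphCone ends Finset.univ S := by
  apply le_antisymm
  · refine Submodule.span_le.2 ?_
    rintro x ⟨f, i, j, hf, hx⟩
    exact mem_subgraphCone_of_mem_edgeGens (hS f) hf hx
  · refine Submodule.span_le.2 ?_
    rintro x (⟨w, -, rfl⟩ | ⟨f, i, j, -, hf, hx⟩)
    · obtain ⟨f, c, hf⟩ := hends w
      have hle : blockCone (Sum.inl w) (Sum.inl c) {Sum.inr f} ≤
          PointedCone.hull ℝ (cosmoVertices ends) := by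
        refine Submodule.span_mono fun x hx => ?_
        obtain ⟨_, he, hx⟩ := Set.mem_iUnion₂.1 hx
        obtain rfl := Finset.mem_singleton.1 he
        exact ⟨f, w, c, hf, hx⟩
      exact hle (single_mem_blockCone_left (Finset.singleton_nonempty _))
    · exact PointedCone.subset_hull ⟨f, i, j, hf, hx⟩

theorem hasGenFun_latticePoints_subgraphCone [Fintype V] [Fintype E] {R : Type*} [CommRing R]
    {T : SimpleGraph V} [DecidableRel T.Adj] (hT : T.IsTree)
    (hends : ∀ e ∈ T.edgeSet, ∃ f, ends f = e) :
    HasGenFun (latticePoints (subgraphCone ends Finset.univ T.edgeFinset : Set (V ⊕ E → ℝ)))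
      (fun x => ∑ i, x i) (PowerSeries.mk 1 * ∏ e ∈ T.edgeFinset,
        ((multiedgePoly R (Finset.card {f | ends f = e}) : PowerSeries R) *
          PowerSeries.mk 1 ^ (Finset.card {f | ends f = e} + 1))) := by
  obtain ⟨r⟩ := hT.connected.nonempty
  refine isTree_leaf_induction hT (P := fun W S => HasGenFun
    (latticePoints (subgraphCone ends W S : Set (V ⊕ E → ℝ))) (fun x => ∑ i, x i)
    (PowerSeries.mk 1 * ∏ e ∈ S,
      ((multiedgePoly R (Finset.card {f | ends f = e}) : PowerSeries R) *
        PowerSeries.mk 1 ^ (Finset.card {f | ends f = e} + 1)))) r ?_ ?_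
  · simpa [subgraphCone] using HasGenFun.latticePoints_hull_single (R := R) (Sum.inl r : V ⊕ E)
  · intro W S v c hclosed hv hc hadj hWS
    have hnew : s(v, c) ∉ S := fun h => hc (hclosed _ h c (Sym2.mem_mk_right v c))
    have hB : (parallelEdges ends s(v, c)).Nonempty := by
      obtain ⟨f, hf⟩ := hends s(v, c) hadj
      exact ⟨_, inr_mem_parallelEdges.2 hf⟩
    rw [subgraphCone_insert hB hv, Finset.prod_insert hnew, mul_left_comm, mul_comm,
      ← card_parallelEdges]
    refine hWS.latticePoints_sup_blockCone
      (fun x hx i hi => apply_eq_zero_of_mem_subgraphCone hclosed hx hi)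
      (single_inl_mem_subgraphCone hv) hv hc ?_ inl_notMem_parallelEdges hB
    intro e he heA
    obtain ⟨f, hf, rfl⟩ := Finset.mem_map.1 he
    exact hnew ((Finset.mem_filter.1 hf).2 ▸ heA)

theorem cosmoVertices_nonempty [Nonempty E] : (cosmoVertices ends).Nonempty := by
  obtain ⟨f⟩ := ‹Nonempty E›
  obtain ⟨⟨i, j⟩, hf⟩ := (ends f).exists_rep
  exact ⟨_, f, i, j, hf.symm, .inl rfl⟩

theorem sum_eq_one_of_mem_cosmoVertices [Fintype V] [Fintype E] {x : V ⊕ E → ℝ}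
    (hx : x ∈ cosmoVertices ends) : ∑ k, x k = 1 := by
  obtain ⟨f, i, j, -, hx⟩ := hx
  exact sum_eq_one_of_mem_edgeGens hx

theorem exists_mem_ends_of_range_eq_edgeSet {V E : Type*} [Nonempty E] {ends : E → Sym2 V}
    {T : SimpleGraph V} (hT : T.Preconnected) (hends : Set.range ends = T.edgeSet) (v : V) :
    ∃ f, v ∈ ends f := by
  have : Nontrivial V := by
    obtain ⟨f⟩ := ‹Nonempty E›
    obtain ⟨⟨i, j⟩, hf⟩ := (ends f).exists_rep
    have hadj : s(i, j) ∈ T.edgeSet := hends ▸ ⟨f, hf.symm⟩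
    exact SimpleGraph.Adj.nontrivial hadj
  obtain ⟨c, hc⟩ := hT.exists_adj_of_nontrivial v
  obtain ⟨f, hf⟩ : s(v, c) ∈ Set.range ends := hends ▸ hc
  exact ⟨f, hf ▸ Sym2.mem_mk_left v c⟩

theorem card_add_card_eq_sum_card_fiber_of_isTree {V E : Type*} [Fintype V] [DecidableEq V]
    [Fintype E] {ends : E → Sym2 V} {T : SimpleGraph V} [DecidableRel T.Adj] (hT : T.IsTree)
    (hends : ∀ f, ends f ∈ T.edgeFinset) :
    Fintype.card V + Fintype.card E =
      ∑ e ∈ T.edgeFinset, (Finset.card {f | ends f = e} + 1) + 1 := by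
  have hfib := Finset.card_eq_sum_card_fiberwise (s := Finset.univ) fun f _ => hends f
  rw [Finset.card_univ] at hfib
  rw [Finset.sum_add_distrib, ← hfib, Finset.sum_const, smul_eq_mul, ← hT.card_edgeFinset]
  omega

theorem isHStarPoly_cosmoPolytope_of_isTree [Fintype V] [Fintype E] [Nonempty E]
    {T : SimpleGraph V} [DecidableRel T.Adj] (hT : T.IsTree) (hends : Set.range ends = T.edgeSet) :
    IsHStarPoly (cosmoPolytope ends) (Fintype.card V + Fintype.card E - 1)
      (∏ e ∈ T.edgeFinset, multiedgePoly ℚ (Finset.card {f | ends f = e})) := by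
  have hmem (f : E) : ends f ∈ T.edgeFinset :=
    SimpleGraph.mem_edgeFinset.2 (hends ▸ Set.mem_range_self f)
  have hgen := hasGenFun_latticePoints_subgraphCone (R := ℚ) hT fun e he => by
    rwa [← hends] at he
  rw [← hull_cosmoVertices
    (exists_mem_ends_of_range_eq_edgeSet hT.connected.preconnected hends) hmem] at hgen
  have hcard : Fintype.card V + Fintype.card E - 1 + 1 =
      ∑ e ∈ T.edgeFinset, (Finset.card {f | ends f = e} + 1) + 1 := by
    rw [card_add_card_eq_sum_card_fiber_of_isTree hT hmem, Nat.add_sub_cancel]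
  have hcoe : ((∏ e ∈ T.edgeFinset, multiedgePoly ℚ (Finset.card {f | ends f = e}) : ℚ[X]) :
      PowerSeries ℚ) = ∏ e ∈ T.edgeFinset, ↑(multiedgePoly ℚ (Finset.card {f | ends f = e})) :=
    map_prod coeToPowerSeries.ringHom _ _
  rw [IsHStarPoly, cosmoPolytope,
    ehrhartSeries_convexHull cosmoVertices_nonempty (fun _ => sum_eq_one_of_mem_cosmoVertices) hgen,
    hcard, Finset.prod_mul_distrib, Finset.prod_pow_eq_pow_sum, mul_left_comm, ← pow_succ',
    mul_assoc, ← mul_pow, PowerSeries.mk_one_mul_one_sub_eq_one, one_pow, mul_one, hcoe]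
end Multitree

/-- Let `n ≥ 1`, `a = (a_1, …, a_n)` with all `a_i ≥ 1`, and let `T` be a
multitree of type `a`: the graph obtained from a tree with `n` edges (enumerated by
`φ : Fin n → Sym2 V`) by replacing its `i`-th edge by `a_i` parallel copies.  Then
`h*(C_T; z) = ∏_i ((1+z)^{a_i} + 2 a_i z (1+z)^{a_i−1})`. -/
theorem hstar_multitree {V : Type*} [Fintype V] [DecidableEq V]
    (n : ℕ) (hn : 0 < n) (a : Fin n → ℕ) (ha : ∀ i, 1 ≤ a i)
    (T : SimpleGraph V) (htree : T.IsTree)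
    (φ : Fin n → Sym2 V) (hφinj : Function.Injective φ)
    (hφmem : ∀ i, φ i ∈ T.edgeSet) (hφsurj : ∀ s ∈ T.edgeSet, ∃ i, φ i = s) :
    IsHStarPoly (cosmoPolytope (fun p : Σ i : Fin n, Fin (a i) => φ p.1))
      (Fintype.card V + Fintype.card (Σ i : Fin n, Fin (a i)) - 1)
      (∏ i : Fin n, ((1 + Polynomial.X) ^ (a i) +
        2 * (a i : Polynomial ℚ) * Polynomial.X * (1 + Polynomial.X) ^ (a i - 1))) := by
  classical
  let ends (p : Σ i : Fin n, Fin (a i)) := φ p.1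
  have : Nonempty (Σ i : Fin n, Fin (a i)) := ⟨⟨0, hn⟩, ⟨0, ha _⟩⟩
  have hrange : Set.range ends = T.edgeSet := by
    refine Set.Subset.antisymm (Set.range_subset_iff.2 fun p => hφmem p.1) fun s hs => ?_
    obtain ⟨i, rfl⟩ := hφsurj s hs
    exact ⟨⟨i, 0, ha i⟩, rfl⟩
  have hedges : T.edgeFinset = Finset.univ.image φ := by
    ext s
    rw [SimpleGraph.mem_edgeFinset, ← Finset.mem_coe, Finset.coe_image, Finset.coe_univ,
      Set.image_univ]
    exact ⟨hφsurj s, by rintro ⟨i, rfl⟩; exact hφmem i⟩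
  have hmult (i : Fin n) : Finset.card {p | ends p = φ i} = a i := by
    simp only [ends, hφinj.eq_iff]
    rw [← Fintype.card_subtype, Fintype.card_congr (Equiv.sigmaSubtype i), Fintype.card_fin]
  have h := isHStarPoly_cosmoPolytope_of_isTree htree hrange
  simpa only [multiedgePoly, hedges, Finset.prod_image hφinj.injOn, hmult] using h
end
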